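/- arXiv:1901.01872 — 6 statements merged into one kernel-verified Lean document; each statement's English description precedes it below -/
import Mathlib

section
/- If the stepsize parameter satisfies 0 < ε < min{1/2, 2π(λ/Λ)²}, then the asynchronous network Newton iterates converge linearly in expectation to the minimizer: for all t ≥ 0, E[‖x(t) − x*‖] ≤ (2(F(x(0)) − F*)/(αm))^{1/2} ((1 − β)^{1/2})^t, where β = αmε(2πλ² − εΛ²)/(λπ) and ‖·‖ is the Euclidean norm. -/
open Matrix BigOperators

noncomputable section

/-- Second derivative of the `i`-th local objective. -/
def d2 {n : ℕ} (f : Fin n → ℝ → ℝ) (i : Fin n) (s : ℝ) : ℝ := deriv (deriv (f i)) s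

/-- The diagonal matrix `G(x)` with `G(x)_ii = f_i''(x_i)`. -/
def Gmat {n : ℕ} (f : Fin n → ℝ → ℝ) (x : Fin n → ℝ) : Matrix (Fin n) (Fin n) ℝ :=
  Matrix.diagonal (fun i => d2 f i (x i))

/-- The Hessian `H(x) = I − W + αG(x)` of the penalized objective. -/
def Hmat {n : ℕ} (W : Matrix (Fin n) (Fin n) ℝ) (f : Fin n → ℝ → ℝ) (α : ℝ)
    (x : Fin n → ℝ) : Matrix (Fin n) (Fin n) ℝ :=
  1 - W + α • Gmat f x

/-- `B = I − 2W_d + W`. -/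
def Bmat {n : ℕ} (W : Matrix (Fin n) (Fin n) ℝ) : Matrix (Fin n) (Fin n) ℝ :=
  1 - (2 : ℝ) • Matrix.diagonal (fun i => W i i) + W

/-- Diagonal entries of the splitting matrix `D(x) = αG(x) + 2(I − W_d)`. -/
def dEntry {n : ℕ} (W : Matrix (Fin n) (Fin n) ℝ) (f : Fin n → ℝ → ℝ) (α : ℝ)
    (x : Fin n → ℝ) (i : Fin n) : ℝ :=
  α * d2 f i (x i) + 2 * (1 - W i i)

/-- `D(x) = αG(x) + 2(I − W_d)`. -/
def Dmat {n : ℕ} (W : Matrix (Fin n) (Fin n) ℝ) (f : Fin n → ℝ → ℝ) (α : ℝ)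
    (x : Fin n → ℝ) : Matrix (Fin n) (Fin n) ℝ :=
  Matrix.diagonal (dEntry W f α x)

/-- `D(x)^{1/2}`. -/
def Dhalf {n : ℕ} (W : Matrix (Fin n) (Fin n) ℝ) (f : Fin n → ℝ → ℝ) (α : ℝ)
    (x : Fin n → ℝ) : Matrix (Fin n) (Fin n) ℝ :=
  Matrix.diagonal (fun i => Real.sqrt (dEntry W f α x i))

/-- `D(x)^{-1/2}`. -/
def Dinvhalf {n : ℕ} (W : Matrix (Fin n) (Fin n) ℝ) (f : Fin n → ℝ → ℝ) (α : ℝ)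
    (x : Fin n → ℝ) : Matrix (Fin n) (Fin n) ℝ :=
  Matrix.diagonal (fun i => (Real.sqrt (dEntry W f α x i))⁻¹)

/-- The approximate Hessian inverse
`Ĥ(x)⁻¹ = D(x)^{-1/2}(I + D(x)^{-1/2} B D(x)^{-1/2}) D(x)^{-1/2}`. -/
def Hhatinv {n : ℕ} (W : Matrix (Fin n) (Fin n) ℝ) (f : Fin n → ℝ → ℝ) (α : ℝ)
    (x : Fin n → ℝ) : Matrix (Fin n) (Fin n) ℝ :=
  Dinvhalf W f α x * (1 + Dinvhalf W f α x * Bmat W * Dinvhalf W f α x) * Dinvhalf W f α x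

/-- The penalized objective `F(x) = (1/2) xᵀ(I−W)x + α Σᵢ f_i(x_i)`. -/
def Fobj {n : ℕ} (W : Matrix (Fin n) (Fin n) ℝ) (f : Fin n → ℝ → ℝ) (α : ℝ)
    (x : Fin n → ℝ) : ℝ :=
  (1 / 2) * (x ⬝ᵥ ((1 - W).mulVec x)) + α * ∑ i, f i (x i)

/-- The gradient `g(x) = (I − W)x + α (f_i'(x_i))_i` of the penalized objective. -/
def gvec {n : ℕ} (W : Matrix (Fin n) (Fin n) ℝ) (f : Fin n → ℝ → ℝ) (α : ℝ)
    (x : Fin n → ℝ) : Fin n → ℝ :=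
  fun i => ((1 - W).mulVec x) i + α * deriv (f i) (x i)

/-- The asynchronous update `x^(i)`: agent `i` moves along the approximate Newton
direction with stepsize `ε / p i`; other coordinates are unchanged. -/
def upd {n : ℕ} (W : Matrix (Fin n) (Fin n) ℝ) (f : Fin n → ℝ → ℝ) (α : ℝ)
    (p : Fin n → ℝ) (ε : ℝ) (x : Fin n → ℝ) (i : Fin n) : Fin n → ℝ :=
  Function.update x i (x i - (ε / p i) * ((Hhatinv W f α x).mulVec (gvec W f α x)) i)

/-- Euclidean norm on `ℝⁿ`. -/
def enorm {n : ℕ} (v : Fin n → ℝ) : ℝ := Real.sqrt (∑ i, v i ^ 2)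

lemma tangent_le (h : ℝ → ℝ) (hh : ContDiff ℝ 2 h) (h2 : ∀ s, 0 ≤ deriv (deriv h) s) (s t : ℝ) :
    h s + deriv h s * (t - s) ≤ h t := by
  have hd : Differentiable ℝ h := hh.differentiable (by norm_num)
  have hd' : Differentiable ℝ (deriv h) := by
    have : ContDiff ℝ 1 (deriv h) := ContDiff.deriv' (n := 1) (by rw [one_add_one_eq_two]; exact hh)
    exact this.differentiable (by norm_num)
  have hc : ConvexOn ℝ Set.univ h :=
    convexOn_univ_of_deriv2_nonneg hd hd' (by intro x; simpa using h2 x)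
  rcases lt_trichotomy s t with hst | hst | hst
  · have := hc.deriv_le_slope (Set.mem_univ s) (Set.mem_univ t) hst (hd s)
    rw [slope_def_field, le_div_iff₀ (by linarith)] at this
    linarith
  · subst hst; simp
  · have := hc.slope_le_deriv (Set.mem_univ t) (Set.mem_univ s) hst (hd s)
    rw [slope_def_field, div_le_iff₀ (by linarith)] at this
    linarith

lemma deriv2_aux (f : ℝ → ℝ) (hf : ContDiff ℝ 2 f) (a b : ℝ) :
    (deriv (fun t => a * f t + b * t ^ 2) = fun t => a * deriv f t + b * (2 * t)) ∧
    (∀ s, deriv (deriv (fun t => a * f t + b * t ^ 2)) s = a * deriv (deriv f) s + b * 2) := by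
  have hd : Differentiable ℝ f := hf.differentiable (by norm_num)
  have hd' : Differentiable ℝ (deriv f) := by
    have : ContDiff ℝ 1 (deriv f) := ContDiff.deriv' (n := 1) (by rw [one_add_one_eq_two]; exact hf)
    exact this.differentiable (by norm_num)
  have h1 : (deriv (fun t => a * f t + b * t ^ 2) = fun t => a * deriv f t + b * (2 * t)) := by
    funext t
    have := (((hd t).hasDerivAt.const_mul a).add (((hasDerivAt_id t).pow 2).const_mul b)).deriv
    simpa [Pi.add_def] using this
  refine ⟨h1, fun s => ?_⟩
  rw [h1]
  have := (((hd' s).hasDerivAt.const_mul a).add (((hasDerivAt_id s).const_mul 2).const_mul b)).deriv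
  simpa [Pi.add_def] using this

lemma scalar_lower (f : ℝ → ℝ) (hf : ContDiff ℝ 2 f) (m : ℝ) (h2 : ∀ s, m ≤ deriv (deriv f) s)
    (s v : ℝ) : f s + deriv f s * v + m / 2 * v ^ 2 ≤ f (s + v) := by
  obtain ⟨h1, h2'⟩ := deriv2_aux f hf 1 (-(m / 2))
  have := tangent_le (fun t => 1 * f t + (-(m / 2)) * t ^ 2) (by fun_prop)
    (by intro s; rw [h2']; linarith [h2 s]) s (s + v)
  rw [h1] at this
  simp only at this
  nlinarith

lemma scalar_upper (f : ℝ → ℝ) (hf : ContDiff ℝ 2 f) (M : ℝ) (h2 : ∀ s, deriv (deriv f) s ≤ M)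
    (s v : ℝ) : f (s + v) ≤ f s + deriv f s * v + M / 2 * v ^ 2 := by
  obtain ⟨h1, h2'⟩ := deriv2_aux f hf (-1) (M / 2)
  have := tangent_le (fun t => (-1) * f t + (M / 2) * t ^ 2) (by fun_prop)
    (by intro s; rw [h2']; linarith [h2 s]) s (s + v)
  rw [h1] at this
  simp only at this
  nlinarith

section quad
variable {n : ℕ} (W : Matrix (Fin n) (Fin n) ℝ)

lemma row_sum (hWone : W.mulVec (fun _ => 1) = fun _ => 1) (i : Fin n) : ∑ j, W i j = 1 := by
  have := congrFun hWone i
  simpa [Matrix.mulVec, dotProduct] using this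

lemma W_quad (hWsymm : W.IsSymm) (hWone : W.mulVec (fun _ => 1) = fun _ => 1) (v : Fin n → ℝ) :
    (∑ i, ∑ j, W i j * v i ^ 2 = ∑ i, v i ^ 2) ∧ (∑ i, ∑ j, W i j * v j ^ 2 = ∑ i, v i ^ 2) := by
  have h1 : ∑ i, ∑ j, W i j * v i ^ 2 = ∑ i, v i ^ 2 := by
    refine Finset.sum_congr rfl fun i _ => ?_
    rw [← Finset.sum_mul, row_sum W hWone, one_mul]
  refine ⟨h1, ?_⟩
  rw [Finset.sum_comm, ← h1]
  refine Finset.sum_congr rfl fun i _ => Finset.sum_congr rfl fun j _ => ?_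
  rw [hWsymm.apply]

lemma W_dot (v : Fin n → ℝ) : v ⬝ᵥ W.mulVec v = ∑ i, ∑ j, W i j * (v i * v j) := by
  simp only [dotProduct, Matrix.mulVec, Finset.mul_sum]
  refine Finset.sum_congr rfl fun i _ => Finset.sum_congr rfl fun j _ => ?_
  ring

lemma W_upper (hWsymm : W.IsSymm) (hWnonneg : ∀ i j, 0 ≤ W i j)
    (hWone : W.mulVec (fun _ => 1) = fun _ => 1) (v : Fin n → ℝ) :
    v ⬝ᵥ W.mulVec v ≤ ∑ i, v i ^ 2 := by
  obtain ⟨h1, h2⟩ := W_quad W hWsymm hWone v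
  have h0 : 0 ≤ ∑ i, ∑ j, W i j * (v i - v j) ^ 2 :=
    Finset.sum_nonneg fun i _ => Finset.sum_nonneg fun j _ => mul_nonneg (hWnonneg i j) (sq_nonneg _)
  have h3 : ∑ i, ∑ j, W i j * (v i - v j) ^ 2 =
      ∑ i, ∑ j, W i j * v i ^ 2 + ∑ i, ∑ j, W i j * v j ^ 2 - 2 * ∑ i, ∑ j, W i j * (v i * v j) := by
    simp only [Finset.mul_sum, ← Finset.sum_add_distrib, ← Finset.sum_sub_distrib]
    refine Finset.sum_congr rfl fun i _ => Finset.sum_congr rfl fun j _ => ?_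
    ring
  rw [W_dot]
  linarith

lemma W_lower (hWsymm : W.IsSymm) (hWnonneg : ∀ i j, 0 ≤ W i j)
    (hWone : W.mulVec (fun _ => 1) = fun _ => 1) (v : Fin n → ℝ) :
    2 * ∑ i, W i i * v i ^ 2 ≤ v ⬝ᵥ W.mulVec v + ∑ i, v i ^ 2 := by
  obtain ⟨h1, h2⟩ := W_quad W hWsymm hWone v
  have h0 : ∑ i, W i i * (2 * v i) ^ 2 ≤ ∑ i, ∑ j, W i j * (v i + v j) ^ 2 := by
    refine Finset.sum_le_sum fun i _ => ?_
    have := Finset.single_le_sum (f := fun j => W i j * (v i + v j) ^ 2)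
      (fun j _ => mul_nonneg (hWnonneg i j) (sq_nonneg _)) (Finset.mem_univ i)
    simpa [two_mul] using this
  have h3 : ∑ i, ∑ j, W i j * (v i + v j) ^ 2 =
      ∑ i, ∑ j, W i j * v i ^ 2 + ∑ i, ∑ j, W i j * v j ^ 2 + 2 * ∑ i, ∑ j, W i j * (v i * v j) := by
    simp only [Finset.mul_sum, ← Finset.sum_add_distrib]
    refine Finset.sum_congr rfl fun i _ => Finset.sum_congr rfl fun j _ => ?_
    ring
  have h4 : ∑ i, W i i * (2 * v i) ^ 2 = 4 * ∑ i, W i i * v i ^ 2 := by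
    rw [Finset.mul_sum]; refine Finset.sum_congr rfl fun i _ => ?_; ring
  rw [W_dot]
  linarith

lemma B_dot (v : Fin n → ℝ) : v ⬝ᵥ (Bmat W).mulVec v =
    ∑ i, v i ^ 2 - 2 * ∑ i, W i i * v i ^ 2 + v ⬝ᵥ W.mulVec v := by
  have : ∀ i, (Bmat W).mulVec v i = v i - 2 * (W i i * v i) + W.mulVec v i := by
    intro i
    simp [Bmat, Matrix.add_mulVec, Matrix.sub_mulVec, Matrix.smul_mulVec, Matrix.mulVec_diagonal]
  simp only [dotProduct, this, Finset.mul_sum, ← Finset.sum_add_distrib, ← Finset.sum_sub_distrib]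
  refine Finset.sum_congr rfl fun i _ => ?_
  ring

lemma sym_dot (A : Matrix (Fin n) (Fin n) ℝ) (hA : A.IsSymm) (u v : Fin n → ℝ) :
    u ⬝ᵥ A.mulVec v = v ⬝ᵥ A.mulVec u := by
  rw [Matrix.dotProduct_mulVec, ← Matrix.mulVec_transpose, hA.eq, dotProduct_comm]

lemma spectral_bound (A : Matrix (Fin n) (Fin n) ℝ) (hA : A.IsSymm) (L : ℝ) (hL : 0 < L)
    (h0 : ∀ v : Fin n → ℝ, 0 ≤ v ⬝ᵥ A.mulVec v) (h1 : ∀ v : Fin n → ℝ, v ⬝ᵥ A.mulVec v ≤ L * (v ⬝ᵥ v))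
    (v : Fin n → ℝ) : A.mulVec v ⬝ᵥ A.mulVec v ≤ L ^ 2 * (v ⬝ᵥ v) := by
  have a := h0 (L • v - A.mulVec v)
  have b := h1 (A.mulVec v)
  have c := h1 v
  have e := sym_dot A hA v (A.mulVec v)
  simp only [Matrix.mulVec_sub, Matrix.mulVec_smul, sub_dotProduct, dotProduct_sub, smul_dotProduct,
    dotProduct_smul, smul_eq_mul] at a
  have a' : 0 ≤ L * (L * (v ⬝ᵥ A.mulVec v) - (A.mulVec v ⬝ᵥ A.mulVec v)) := by
    rw [e] at a; nlinarith
  have := nonneg_of_mul_nonneg_right a' hL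
  nlinarith

lemma B_symm (hWsymm : W.IsSymm) : (Bmat W).IsSymm := by
  unfold Bmat Matrix.IsSymm
  simp [Matrix.transpose_add, Matrix.transpose_sub, hWsymm.eq]

lemma Hhat_symm (hWsymm : W.IsSymm) (f : Fin n → ℝ → ℝ) (α : ℝ) (x : Fin n → ℝ) :
    (Hhatinv W f α x).IsSymm := by
  unfold Hhatinv Matrix.IsSymm Dinvhalf
  simp [Matrix.transpose_mul, (B_symm W hWsymm).eq, Matrix.mul_assoc]

lemma Hhat_apply (f : Fin n → ℝ → ℝ) (α : ℝ) (x : Fin n → ℝ) (hd : ∀ i, 0 < dEntry W f α x i)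
    (v : Fin n → ℝ) : v ⬝ᵥ (Hhatinv W f α x).mulVec v =
      ∑ i, (dEntry W f α x i)⁻¹ * v i ^ 2 + (fun i => (dEntry W f α x i)⁻¹ * v i) ⬝ᵥ
        (Bmat W).mulVec (fun i => (dEntry W f α x i)⁻¹ * v i) := by
  have hs : ∀ i, (√(dEntry W f α x i))⁻¹ * (√(dEntry W f α x i))⁻¹ = (dEntry W f α x i)⁻¹ := by
    intro i; rw [← mul_inv, Real.mul_self_sqrt (hd i).le]
  have hy : (Dinvhalf W f α x).mulVec ((Dinvhalf W f α x).mulVec v) =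
      fun i => (dEntry W f α x i)⁻¹ * v i := by
    funext i; simp only [Dinvhalf, Matrix.mulVec_diagonal]; rw [← mul_assoc, hs]
  have hDs : ∀ u w : Fin n → ℝ, u ⬝ᵥ (Dinvhalf W f α x).mulVec w = (Dinvhalf W f α x).mulVec u ⬝ᵥ w := by
    intro u w
    rw [sym_dot _ (by simp [Dinvhalf, Matrix.IsSymm]), dotProduct_comm]
  unfold Hhatinv
  simp only [← Matrix.mulVec_mulVec, Matrix.add_mulVec, Matrix.one_mulVec, hDs, dotProduct_add, hy]
  congr 1
  simp only [dotProduct]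
  refine Finset.sum_congr rfl fun i _ => ?_
  ring

lemma Fobj_add (hWsymm : W.IsSymm) (f : Fin n → ℝ → ℝ) (α : ℝ) (x v : Fin n → ℝ) :
    Fobj W f α (x + v) = Fobj W f α x + ((1 - W).mulVec x) ⬝ᵥ v + 1 / 2 * (v ⬝ᵥ (1 - W).mulVec v)
      + α * ∑ i, (f i (x i + v i) - f i (x i)) := by
  have e := sym_dot (1 - W) (by simp [Matrix.IsSymm, hWsymm.eq]) x v
  unfold Fobj
  rw [dotProduct_comm ((1 - W).mulVec x) v]
  simp only [Matrix.mulVec_add, dotProduct_add, add_dotProduct, Pi.add_apply, Finset.sum_sub_distrib, e]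
  ring

lemma F_lower (hWsymm : W.IsSymm) (hWnonneg : ∀ i j, 0 ≤ W i j)
    (hWone : W.mulVec (fun _ => 1) = fun _ => 1)
    (f : Fin n → ℝ → ℝ) (hf : ∀ i, ContDiff ℝ 2 (f i)) (m : ℝ) (hd2 : ∀ i s, m ≤ d2 f i s)
    (α : ℝ) (hα : 0 < α) (x v : Fin n → ℝ) :
    Fobj W f α x + ∑ i, gvec W f α x i * v i + α * m / 2 * ∑ i, v i ^ 2 ≤ Fobj W f α (x + v) := by
  rw [Fobj_add W hWsymm]
  have h1 : 0 ≤ v ⬝ᵥ (1 - W).mulVec v := by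
    have := W_upper W hWsymm hWnonneg hWone v
    simp only [Matrix.sub_mulVec, Matrix.one_mulVec, dotProduct_sub]
    have e : v ⬝ᵥ v = ∑ i, v i ^ 2 := by simp [dotProduct, sq]
    linarith
  have h2 : α * ∑ i, (deriv (f i) (x i) * v i + m / 2 * v i ^ 2) ≤
      α * ∑ i, (f i (x i + v i) - f i (x i)) := by
    refine mul_le_mul_of_nonneg_left (Finset.sum_le_sum fun i _ => ?_) hα.le
    linarith [scalar_lower (f i) (hf i) m (hd2 i) (x i) (v i)]
  have h3 : ∑ i, gvec W f α x i * v i + α * m / 2 * ∑ i, v i ^ 2 = ((1 - W).mulVec x) ⬝ᵥ v +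
      α * ∑ i, (deriv (f i) (x i) * v i + m / 2 * v i ^ 2) := by
    simp only [dotProduct, gvec, Finset.mul_sum, ← Finset.sum_add_distrib]
    refine Finset.sum_congr rfl fun i _ => ?_
    ring
  linarith

lemma F_upper (hWsymm : W.IsSymm)
    (f : Fin n → ℝ → ℝ) (hf : ∀ i, ContDiff ℝ 2 (f i)) (M : ℝ) (hd2 : ∀ i s, d2 f i s ≤ M)
    (α : ℝ) (hα : 0 < α) (K : ℝ) (hK : ∀ i, 1 - W i i + α * M ≤ K) (x : Fin n → ℝ) (i : Fin n) (h : ℝ) :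
    Fobj W f α (Function.update x i (x i - h)) ≤ Fobj W f α x - h * gvec W f α x i + K / 2 * h ^ 2 := by
  have hu : Function.update x i (x i - h) = x + Pi.single i (-h) := by
    funext j
    by_cases hj : j = i
    · subst hj; simp [sub_eq_add_neg]
    · simp [hj]
  rw [hu, Fobj_add W hWsymm]
  have h1 : (Pi.single i (-h) : Fin n → ℝ) ⬝ᵥ (1 - W).mulVec (Pi.single i (-h)) = (1 - W i i) * h ^ 2 := by
    simp
    ring
  have h2 : ∑ j, (f j (x j + (Pi.single i (-h) : Fin n → ℝ) j) - f j (x j)) = f i (x i + -h) - f i (x i) := by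
    rw [Finset.sum_eq_single i]
    · simp
    · intro j _ hj; simp [hj]
    · simp
  have h3 : (1 - W).mulVec x ⬝ᵥ (Pi.single i (-h) : Fin n → ℝ) = - h * (1 - W).mulVec x i := by
    simp [mul_comm]
  rw [h1, h2, h3]
  have h4 := mul_le_mul_of_nonneg_left (scalar_upper (f i) (hf i) M (hd2 i) (x i) (-h)) hα.le
  have h5 := mul_le_mul_of_nonneg_right (hK i) (sq_nonneg h)
  simp only [gvec]
  nlinarith

end quad

lemma one_step {n : ℕ} (W : Matrix (Fin n) (Fin n) ℝ) (hWsymm : W.IsSymm)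
    (hWnonneg : ∀ i j, 0 ≤ W i j)
    (hWone : W.mulVec (fun _ => 1) = fun _ => 1)
    (δ Δ : ℝ) (hδΔ : δ ≤ Δ) (hΔ : Δ < 1)
    (hWdiag : ∀ i, δ ≤ W i i ∧ W i i ≤ Δ)
    (f : Fin n → ℝ → ℝ) (hf : ∀ i, ContDiff ℝ 2 (f i))
    (m M : ℝ) (hm : 0 < m) (hmM : m ≤ M)
    (hd2 : ∀ i s, m ≤ d2 f i s ∧ d2 f i s ≤ M)
    (α : ℝ) (hα : 0 < α)
    (p : Fin n → ℝ) (pmin : ℝ) (hpmin : 0 < pmin)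
    (hp : ∀ i, pmin ≤ p i) (hpsum : ∑ i, p i = 1)
    (xstar : Fin n → ℝ)
    (ρ lam Lam : ℝ) (hρ : ρ = 2 * (1 - δ) / (2 * (1 - δ) + α * m))
    (hlam : lam = 1 / (2 * (1 - δ) + α * M))
    (hLam : Lam = (1 + ρ) / (2 * (1 - Δ) + α * m))
    (ε : ℝ) (hε : 0 < ε) (hεlt : ε < min (1 / 2) (2 * pmin * (lam / Lam) ^ 2))
    (β : ℝ) (hβ : β = α * m * ε * (2 * pmin * lam ^ 2 - ε * Lam ^ 2) / (lam * pmin))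
    (x : Fin n → ℝ) :
    ∑ i, p i * (Fobj W f α (upd W f α p ε x i) - Fobj W f α xstar) ≤
      (1 - β) * (Fobj W f α x - Fobj W f α xstar) := by
  have hαm : 0 < α * m := mul_pos hα hm
  have hαmM : α * m ≤ α * M := mul_le_mul_of_nonneg_left hmM hα.le
  have hlam0 : 0 < lam := by rw [hlam]; apply one_div_pos.mpr; linarith
  have hρ0 : 0 < ρ := by rw [hρ]; apply div_pos <;> linarith
  have hLam0 : 0 < Lam := by rw [hLam]; apply div_pos <;> linarith
  have hdl : ∀ i, α * m + 2 * (1 - W i i) ≤ dEntry W f α x i := fun i => by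
    unfold dEntry; linarith [mul_le_mul_of_nonneg_left (hd2 i (x i)).1 hα.le]
  have hdu : ∀ i, dEntry W f α x i ≤ α * M + 2 * (1 - W i i) := fun i => by
    unfold dEntry; linarith [mul_le_mul_of_nonneg_left (hd2 i (x i)).2 hα.le]
  have hd : ∀ i, 0 < dEntry W f α x i := fun i => by linarith [hdl i, (hWdiag i).2]
  have hA := Hhat_symm W hWsymm f α x
  have hlow : ∀ v : Fin n → ℝ, lam * (v ⬝ᵥ v) ≤ v ⬝ᵥ (Hhatinv W f α x).mulVec v := by
    intro v
    rw [Hhat_apply W f α x hd, B_dot]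
    have := W_lower W hWsymm hWnonneg hWone (fun i => (dEntry W f α x i)⁻¹ * v i)
    have h2 : lam * (v ⬝ᵥ v) ≤ ∑ i, (dEntry W f α x i)⁻¹ * v i ^ 2 := by
      simp only [dotProduct, Finset.mul_sum]
      refine Finset.sum_le_sum fun i _ => ?_
      rw [← sq]
      refine mul_le_mul_of_nonneg_right ?_ (sq_nonneg _)
      rw [hlam, one_div]
      exact inv_anti₀ (hd i) (by linarith [hdu i, (hWdiag i).1])
    linarith
  have hup : ∀ v : Fin n → ℝ, v ⬝ᵥ (Hhatinv W f α x).mulVec v ≤ Lam * (v ⬝ᵥ v) := by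
    intro v
    rw [Hhat_apply W f α x hd, B_dot]
    have := W_upper W hWsymm hWnonneg hWone (fun i => (dEntry W f α x i)⁻¹ * v i)
    have h2 : ∑ i, (dEntry W f α x i)⁻¹ * v i ^ 2 +
        (2 * ∑ i, ((dEntry W f α x i)⁻¹ * v i) ^ 2 - 2 * ∑ i, W i i * ((dEntry W f α x i)⁻¹ * v i) ^ 2)
        ≤ Lam * (v ⬝ᵥ v) := by
      simp only [dotProduct, Finset.mul_sum, ← Finset.sum_add_distrib, ← Finset.sum_sub_distrib]
      refine Finset.sum_le_sum fun i _ => ?_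
      have e1 : (dEntry W f α x i)⁻¹ ≤ (2 * (1 - Δ) + α * m)⁻¹ :=
        inv_anti₀ (by linarith) (by linarith [hdl i, (hWdiag i).2])
      have e2 : 2 * (1 - W i i) * (dEntry W f α x i)⁻¹ ≤ ρ := by
        rw [hρ, ← div_eq_mul_inv, div_le_div_iff₀ (hd i) (by linarith)]
        have a1 := (hWdiag i).1
        have a2 := (hWdiag i).2
        have a3 := hdl i
        have : 2 * (1 - δ) * (α * m + 2 * (1 - W i i)) ≤ 2 * (1 - δ) * dEntry W f α x i :=
          mul_le_mul_of_nonneg_left a3 (by linarith)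
        have : (1 - W i i) * (α * m) ≤ (1 - δ) * (α * m) :=
          mul_le_mul_of_nonneg_right (by linarith) hαm.le
        nlinarith
      have e3 : (dEntry W f α x i)⁻¹ * (1 + 2 * (1 - W i i) * (dEntry W f α x i)⁻¹) ≤ Lam := by
        rw [hLam, div_eq_mul_inv, mul_comm (1 + ρ)]
        have a2 := (hWdiag i).2
        have a4 := inv_pos.mpr (hd i)
        have a5 : 0 ≤ 2 * (1 - W i i) * (dEntry W f α x i)⁻¹ := mul_nonneg (by linarith) a4.le
        exact mul_le_mul e1 (by linarith) (by linarith) (by linarith)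
      calc _ = (dEntry W f α x i)⁻¹ * (1 + 2 * (1 - W i i) * (dEntry W f α x i)⁻¹) * (v i * v i) := by ring
        _ ≤ _ := mul_le_mul_of_nonneg_right e3 (mul_self_nonneg _)
    linarith
  set g := gvec W f α x with hg
  set d := (Hhatinv W f α x).mulVec g with hdd
  have hgd := hlow g
  have hdd2 : d ⬝ᵥ d ≤ Lam ^ 2 * (g ⬝ᵥ g) := spectral_bound _ hA Lam hLam0
    (fun v => le_trans (mul_nonneg hlam0.le (by simpa using dotProduct_star_self_nonneg v)) (hlow v)) hup g
  have hK : ∀ i, 1 - W i i + α * M ≤ 1 / lam := fun i => by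
    rw [hlam, one_div_one_div]; linarith [(hWdiag i).1, (hWdiag i).2]
  -- each coordinate
  have hstep : ∀ i, p i * (Fobj W f α (upd W f α p ε x i) - Fobj W f α xstar) ≤
      p i * (Fobj W f α x - Fobj W f α xstar) - ε * (g i * d i)
        + ε ^ 2 / (2 * lam * pmin) * (d i * d i) := by
    intro i
    have hpi : 0 < p i := lt_of_lt_of_le hpmin (hp i)
    have h1 := F_upper W hWsymm f hf M (fun i s => (hd2 i s).2) α hα (1 / lam) hK x i (ε / p i * d i)
    have h2 := mul_le_mul_of_nonneg_left h1 hpi.le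
    have h3 : p i * (1 / lam / 2 * (ε / p i * d i) ^ 2) ≤ ε ^ 2 / (2 * lam * pmin) * (d i * d i) := by
      have : p i * (1 / lam / 2 * (ε / p i * d i) ^ 2) = ε ^ 2 / (2 * lam * p i) * (d i * d i) := by
        field_simp
      rw [this]
      have := hp i
      refine mul_le_mul_of_nonneg_right ?_ (mul_self_nonneg _)
      gcongr
    have h4 : p i * (ε / p i * d i * g i) = ε * (g i * d i) := by field_simp
    have h5 : upd W f α p ε x i = Function.update x i (x i - ε / p i * d i) := rfl
    rw [h5]
    rw [← hg] at h2
    nlinarith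
  have hsum := Finset.sum_le_sum (fun i (_ : i ∈ Finset.univ) => hstep i)
  have hsum2 : ∑ i, (p i * (Fobj W f α x - Fobj W f α xstar) - ε * (g i * d i)
        + ε ^ 2 / (2 * lam * pmin) * (d i * d i)) = (Fobj W f α x - Fobj W f α xstar) - ε * (g ⬝ᵥ d)
        + ε ^ 2 / (2 * lam * pmin) * (d ⬝ᵥ d) := by
    simp only [Finset.sum_add_distrib, Finset.sum_sub_distrib, ← Finset.mul_sum, ← Finset.sum_mul,
      hpsum, one_mul, dotProduct]
  rw [hsum2] at hsum
  -- PL inequality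
  have hPL : 2 * (α * m) * (Fobj W f α x - Fobj W f α xstar) ≤ g ⬝ᵥ g := by
    have h1 := F_lower W hWsymm hWnonneg hWone f hf m (fun i s => (hd2 i s).1) α hα x (xstar - x)
    rw [add_sub_cancel, ← hg] at h1
    have h2 : 0 ≤ ∑ i, (g i + α * m * (xstar - x) i) ^ 2 := Finset.sum_nonneg fun i _ => sq_nonneg _
    have h3 : ∑ i, (g i + α * m * (xstar - x) i) ^ 2 = g ⬝ᵥ g + 2 * (α * m) * (∑ i, g i * (xstar - x) i
        + α * m / 2 * ∑ i, (xstar - x) i ^ 2) := by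
      simp only [dotProduct, Finset.mul_sum, ← Finset.sum_add_distrib]
      refine Finset.sum_congr rfl fun i _ => ?_
      ring
    have h4 := mul_le_mul_of_nonneg_left h1 (by linarith : 0 ≤ 2 * (α * m))
    nlinarith
  have hc : 0 ≤ ε * (2 * pmin * lam ^ 2 - ε * Lam ^ 2) / (2 * lam * pmin) := by
    have h1 : ε < 2 * pmin * (lam / Lam) ^ 2 := lt_of_lt_of_le hεlt (min_le_right _ _)
    have h2 : 2 * pmin * (lam / Lam) ^ 2 = 2 * pmin * lam ^ 2 / Lam ^ 2 := by rw [div_pow]; ring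
    rw [h2, lt_div_iff₀ (by positivity)] at h1
    apply div_nonneg
    · exact mul_nonneg hε.le (by linarith)
    · positivity
  have hfin := mul_le_mul_of_nonneg_left hPL hc
  have hβ2 : β * (Fobj W f α x - Fobj W f α xstar) =
      ε * (2 * pmin * lam ^ 2 - ε * Lam ^ 2) / (2 * lam * pmin) *
        (2 * (α * m) * (Fobj W f α x - Fobj W f α xstar)) := by
    rw [hβ]; field_simp
  have hγ : ε * (2 * pmin * lam ^ 2 - ε * Lam ^ 2) / (2 * lam * pmin) * (g ⬝ᵥ g) =
      ε * (lam * (g ⬝ᵥ g)) - ε ^ 2 / (2 * lam * pmin) * (Lam ^ 2 * (g ⬝ᵥ g)) := by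
    field_simp
  have k1 := mul_le_mul_of_nonneg_left hgd hε.le
  have k2 := mul_le_mul_of_nonneg_left hdd2 (by positivity : 0 ≤ ε ^ 2 / (2 * lam * pmin))
  linarith

lemma strong_min {n : ℕ} (W : Matrix (Fin n) (Fin n) ℝ) (hWsymm : W.IsSymm)
    (hWnonneg : ∀ i j, 0 ≤ W i j)
    (hWone : W.mulVec (fun _ => 1) = fun _ => 1)
    (f : Fin n → ℝ → ℝ) (hf : ∀ i, ContDiff ℝ 2 (f i))
    (m M : ℝ) (hm : 0 < m) (hmM : m ≤ M)
    (hd2 : ∀ i s, m ≤ d2 f i s ∧ d2 f i s ≤ M)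
    (α : ℝ) (hα : 0 < α)
    (xstar : Fin n → ℝ) (hmin : ∀ y, Fobj W f α xstar ≤ Fobj W f α y) (x : Fin n → ℝ) :
    ∑ i, (x - xstar) i ^ 2 ≤ 2 / (α * m) * (Fobj W f α x - Fobj W f α xstar) := by
  have hαM : 0 < α * M := mul_pos hα (hm.trans_le hmM)
  have hg : ∀ i, gvec W f α xstar i = 0 := by
    intro i
    have hK : ∀ i, 1 - W i i + α * M ≤ 1 + α * M := fun i => by linarith [hWnonneg i i]
    have h1 := F_upper W hWsymm f hf M (fun i s => (hd2 i s).2) α hα (1 + α * M) hK xstar i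
      (gvec W f α xstar i / (1 + α * M))
    have h2 := (hmin _).trans h1
    have h3 : gvec W f α xstar i / (1 + α * M) * gvec W f α xstar i
      = gvec W f α xstar i ^ 2 / (1 + α * M) := by ring
    have h4 : (1 + α * M) / 2 * (gvec W f α xstar i / (1 + α * M)) ^ 2 =
       gvec W f α xstar i ^ 2 / (1 + α * M) / 2 := by
      have : (1 + α * M) ≠ 0 := by linarith
      field_simp
    rw [h3, h4] at h2
    have h5 : gvec W f α xstar i ^ 2 / (1 + α * M) ≤ 0 := by linarith
    rw [div_le_iff₀ (by linarith), zero_mul] at h5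
    exact pow_eq_zero_iff (two_ne_zero) |>.mp (le_antisymm h5 (sq_nonneg _))
  have h1 := F_lower W hWsymm hWnonneg hWone f hf m (fun i s => (hd2 i s).1) α hα xstar (x - xstar)
  rw [add_sub_cancel] at h1
  simp only [hg, zero_mul, Finset.sum_const_zero, add_zero] at h1
  have hαm : 0 < α * m := mul_pos hα hm
  rw [div_mul_eq_mul_div, le_div_iff₀ hαm]
  linarith

open MeasureTheory ProbabilityTheory in
lemma integrable_fin {Ω κ : Type*} [MeasurableSpace Ω] (μ : Measure Ω) [IsProbabilityMeasure μ]
    [Finite κ] [MeasurableSpace κ] [MeasurableSingletonClass κ] (Z : Ω → κ) (hZ : Measurable Z)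
    (φ : κ → ℝ) : Integrable (fun ω => φ (Z ω)) μ := by
  have : IsProbabilityMeasure (μ.map Z) := Measure.isProbabilityMeasure_map hZ.aemeasurable
  exact (Integrable.of_finite (f := φ) (μ := μ.map Z)).comp_measurable hZ

open MeasureTheory ProbabilityTheory in
lemma prob_step {Ω κ : Type*} [MeasurableSpace Ω] (μ : Measure Ω) [IsProbabilityMeasure μ]
    [Finite κ] [MeasurableSpace κ] [MeasurableSingletonClass κ] (Z : Ω → κ) (hZ : Measurable Z)
    {n : ℕ} (J : Ω → Fin n) (hJ : Measurable J) (hind : IndepFun Z J μ) (p : Fin n → ℝ)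
    (hp : ∀ i, 0 ≤ p i) (hJp : ∀ i, μ {ω | J ω = i} = ENNReal.ofReal (p i))
    (φ : κ → Fin n → ℝ) :
    ∫ ω, φ (Z ω) (J ω) ∂μ = ∫ ω, ∑ i, p i * φ (Z ω) i ∂μ := by
  have h1 : ∀ ω, φ (Z ω) (J ω) = ∑ i, φ (Z ω) i * (if J ω = i then 1 else 0) := by
    intro ω; simp
  simp only [h1]
  rw [integral_finsetSum, integral_finsetSum]
  · refine Finset.sum_congr rfl fun i _ => ?_
    have hi : IndepFun (fun ω => φ (Z ω) i) (fun ω => if J ω = i then (1 : ℝ) else 0) μ :=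
      hind.comp (φ := fun z => φ z i) (ψ := fun j => if j = i then (1 : ℝ) else 0)
        (measurable_of_finite _) (measurable_of_finite _)
    have := hi.integral_fun_mul_eq_mul_integral
      (integrable_fin μ Z hZ (fun z => φ z i)).aestronglyMeasurable
      (integrable_fin μ J hJ (fun j => if j = i then (1 : ℝ) else 0)).aestronglyMeasurable
    rw [this, integral_const_mul, mul_comm]
    congr 1
    have hs : MeasurableSet {ω | J ω = i} := hJ (measurableSet_singleton i)
    have e : (fun ω => if J ω = i then (1 : ℝ) else 0) = Set.indicator {ω | J ω = i} 1 := by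
      funext ω; simp [Set.indicator]
    rw [e, integral_indicator_one hs, measureReal_def, hJp, ENNReal.toReal_ofReal (hp i)]
  · intro i _
    exact integrable_fin μ Z hZ (fun z => p i * φ z i)
  · intro i _
    have := integrable_fin μ (fun ω => (Z ω, J ω)) (hZ.prodMk hJ)
      (fun z => φ z.1 i * (if z.2 = i then 1 else 0))
    exact this

/-- The iterates are a function of the first indices. -/
lemma path_exists {Ω E : Type*} {n : ℕ} (U : E → Fin n → E) (I : ℕ → Ω → Fin n) (x0 : E)
    (X : ℕ → Ω → E) (hX0 : ∀ ω, X 0 ω = x0)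
    (hXsucc : ∀ (t : ℕ) (ω : Ω), X (t + 1) ω = U (X t ω) (I (t + 1) ω)) (t : ℕ) :
    ∃ Φ : ((i : (Finset.range (t + 1) : Finset ℕ)) → Fin n) → E,
      ∀ ω, X t ω = Φ (fun i => I i ω) := by
  induction t with
  | zero => exact ⟨fun _ => x0, hX0⟩
  | succ t ih =>
    obtain ⟨Φ, hΦ⟩ := ih
    refine ⟨fun z => U (Φ fun i => z ⟨i, ?_⟩) (z ⟨t + 1, by simp⟩), fun ω => ?_⟩
    · have := i.2; simp only [Finset.mem_range] at this ⊢; omega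
    · rw [hXsucc, hΦ]

/-- Global linear convergence in expectation of the iterates:
`E[‖x(t) − x*‖] ≤ (2(F(x(0)) − F*)/(αm))^{1/2} ((1 − β)^{1/2})^t`. -/
theorem stmt10 (n : ℕ) (hn : 1 ≤ n)
    (W : Matrix (Fin n) (Fin n) ℝ) (hWsymm : W.IsSymm)
    (hWnonneg : ∀ i j, 0 ≤ W i j) (hWlt : ∀ i j, W i j < 1)
    (hWone : W.mulVec (fun _ => 1) = fun _ => 1)
    (hWnull : ∀ x : Fin n → ℝ, ((1 - W).mulVec x = 0 ↔ ∃ c : ℝ, x = fun _ => c))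
    (δ Δ : ℝ) (hδ : 0 < δ) (hδΔ : δ ≤ Δ) (hΔ : Δ < 1)
    (hWdiag : ∀ i, δ ≤ W i i ∧ W i i ≤ Δ)
    (f : Fin n → ℝ → ℝ) (hf : ∀ i, ContDiff ℝ 2 (f i))
    (hconv : ∀ i, ConvexOn ℝ Set.univ (f i))
    (m M : ℝ) (hm : 0 < m) (hmM : m ≤ M)
    (hd2 : ∀ i s, m ≤ d2 f i s ∧ d2 f i s ≤ M)
    (α : ℝ) (hα : 0 < α)
    (p : Fin n → ℝ) (pmin pmax : ℝ) (hpmin : 0 < pmin) (hpmax : pmax < 1)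
    (hp : ∀ i, pmin ≤ p i ∧ p i ≤ pmax) (hpsum : ∑ i, p i = 1)
    (xstar : Fin n → ℝ) (hmin : ∀ y, Fobj W f α xstar ≤ Fobj W f α y)
    (ρ lam Lam : ℝ) (hρ : ρ = 2 * (1 - δ) / (2 * (1 - δ) + α * m))
    (hlam : lam = 1 / (2 * (1 - δ) + α * M))
    (hLam : Lam = (1 + ρ) / (2 * (1 - Δ) + α * m))
    (ε : ℝ) (hε : 0 < ε) (hεlt : ε < min (1 / 2) (2 * pmin * (lam / Lam) ^ 2))
    (β : ℝ) (hβ : β = α * m * ε * (2 * pmin * lam ^ 2 - ε * Lam ^ 2) / (lam * pmin))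
    (Ω : Type*) [MeasurableSpace Ω] (μ : MeasureTheory.Measure Ω)
    [MeasureTheory.IsProbabilityMeasure μ]
    (I : ℕ → Ω → Fin n) (hImeas : ∀ t, Measurable (I t))
    (hIindep : ProbabilityTheory.iIndepFun I μ)
    (hIdist : ∀ t i, μ {ω | I t ω = i} = ENNReal.ofReal (p i))
    (x0 : Fin n → ℝ) (X : ℕ → Ω → Fin n → ℝ)
    (hX0 : ∀ ω, X 0 ω = x0)
    (hXsucc : ∀ (t : ℕ) (ω : Ω), X (t + 1) ω = upd W f α p ε (X t ω) (I (t + 1) ω))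
    : ∀ t : ℕ,
      ∫ ω, _root_.enorm (X t ω - xstar) ∂μ ≤
        Real.sqrt (2 * (Fobj W f α x0 - Fobj W f α xstar) / (α * m)) *
          Real.sqrt (1 - β) ^ t := by
  intro t
  have hp0 : ∀ i, 0 ≤ p i := fun i => hpmin.le.trans (hp i).1
  have hαm : 0 < α * m := mul_pos hα hm
  have hV0 : ∀ y, 0 ≤ Fobj W f α y - Fobj W f α xstar := fun y => sub_nonneg.mpr (hmin y)
  -- tuples
  have hZ : ∀ t : ℕ, Measurable (fun ω => fun i : (Finset.range (t + 1) : Finset ℕ) => I i ω) :=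
    fun t => measurable_pi_lambda _ fun i => hImeas i
  have hInteg : ∀ (t : ℕ) (φ : (Fin n → ℝ) → ℝ), MeasureTheory.Integrable (fun ω => φ (X t ω)) μ := by
    intro t φ
    obtain ⟨Φ, hΦ⟩ := path_exists (upd W f α p ε) I x0 X hX0 hXsucc t
    simp only [hΦ]
    exact integrable_fin μ _ (hZ t) (fun z => φ (Φ z))
  have hrec : ∀ t, ∫ ω, (Fobj W f α (X (t + 1) ω) - Fobj W f α xstar) ∂μ ≤
      (1 - β) * ∫ ω, (Fobj W f α (X t ω) - Fobj W f α xstar) ∂μ := by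
    intro t
    obtain ⟨Φ, hΦ⟩ := path_exists (upd W f α p ε) I x0 X hX0 hXsucc t
    have hind : ProbabilityTheory.IndepFun
        (fun ω => fun i : (Finset.range (t + 1) : Finset ℕ) => I i ω) (I (t + 1)) μ := by
      have h1 := hIindep.indepFun_finset (Finset.range (t + 1)) {t + 1} (by simp) hImeas
      have h2 := h1.comp (φ := id)
        (ψ := fun z : (({t + 1} : Finset ℕ) → Fin n) => z ⟨t + 1, by simp⟩)
        measurable_id (measurable_of_finite _)
      exact h2
    have e := prob_step μ _ (hZ t) (I (t + 1)) (hImeas _) hind p hp0 (hIdist (t + 1))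
      (fun z i => Fobj W f α (upd W f α p ε (Φ z) i) - Fobj W f α xstar)
    simp only [hXsucc, hΦ]
    rw [e, ← MeasureTheory.integral_const_mul]
    refine MeasureTheory.integral_mono ?_ ?_ ?_
    · exact integrable_fin μ _ (hZ t)
        (fun z => ∑ i, p i * (Fobj W f α (upd W f α p ε (Φ z) i) - Fobj W f α xstar))
    · exact integrable_fin μ _ (hZ t) (fun z => (1 - β) * (Fobj W f α (Φ z) - Fobj W f α xstar))
    · intro ω
      exact one_step W hWsymm hWnonneg hWone δ Δ hδΔ hΔ hWdiag f hf m M hm hmM hd2 α hα p pmin hpmin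
        (fun i => (hp i).1) hpsum xstar ρ lam Lam hρ hlam hLam ε hε hεlt β hβ _
  have hEV0 : ∀ t, 0 ≤ ∫ ω, (Fobj W f α (X t ω) - Fobj W f α xstar) ∂μ :=
    fun t => MeasureTheory.integral_nonneg fun ω => hV0 _
  have hsq : 1 - β ≤ √(1 - β) ^ 2 := by
    rcases le_total 0 (1 - β) with h | h
    · rw [Real.sq_sqrt h]
    · exact h.trans (sq_nonneg _)
  have hEV : ∀ t, ∫ ω, (Fobj W f α (X t ω) - Fobj W f α xstar) ∂μ ≤
      (√(1 - β) ^ t) ^ 2 * (Fobj W f α x0 - Fobj W f α xstar) := by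
    intro t
    induction t with
    | zero => simp [hX0]
    | succ t ih =>
      calc _ ≤ (1 - β) * ∫ ω, (Fobj W f α (X t ω) - Fobj W f α xstar) ∂μ := hrec t
        _ ≤ √(1 - β) ^ 2 * ∫ ω, (Fobj W f α (X t ω) - Fobj W f α xstar) ∂μ :=
          mul_le_mul_of_nonneg_right hsq (hEV0 t)
        _ ≤ √(1 - β) ^ 2 * ((√(1 - β) ^ t) ^ 2 * (Fobj W f α x0 - Fobj W f α xstar)) :=
          mul_le_mul_of_nonneg_left ih (sq_nonneg _)
        _ = _ := by ring
  -- Jensen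
  set c := ∫ ω, _root_.enorm (X t ω - xstar) ∂μ with hc
  have hJ : c ^ 2 ≤ ∫ ω, (_root_.enorm (X t ω - xstar)) ^ 2 ∂μ := by
    have h0 : 0 ≤ ∫ ω, (_root_.enorm (X t ω - xstar) - c) ^ 2 ∂μ :=
      MeasureTheory.integral_nonneg fun ω => sq_nonneg _
    have h1 : ∫ ω, (_root_.enorm (X t ω - xstar) - c) ^ 2 ∂μ =
        ∫ ω, ((_root_.enorm (X t ω - xstar)) ^ 2 - (2 * c * _root_.enorm (X t ω - xstar) - c ^ 2)) ∂μ := by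
      congr 1; funext ω; ring
    rw [h1, MeasureTheory.integral_sub (hInteg t fun y => (_root_.enorm (y - xstar)) ^ 2)
      (hInteg t fun y => 2 * c * _root_.enorm (y - xstar) - c ^ 2),
      MeasureTheory.integral_sub (hInteg t fun y => 2 * c * _root_.enorm (y - xstar))
      (hInteg t fun y => c ^ 2), MeasureTheory.integral_const_mul, ← hc] at h0
    simp at h0
    nlinarith
  have hN : ∫ ω, (_root_.enorm (X t ω - xstar)) ^ 2 ∂μ ≤
      2 / (α * m) * ∫ ω, (Fobj W f α (X t ω) - Fobj W f α xstar) ∂μ := by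
    rw [← MeasureTheory.integral_const_mul]
    refine MeasureTheory.integral_mono (hInteg t fun y => (_root_.enorm (y - xstar)) ^ 2)
      (hInteg t fun y => 2 / (α * m) * (Fobj W f α y - Fobj W f α xstar)) fun ω => ?_
    simp only [_root_.enorm]
    rw [Real.sq_sqrt (Finset.sum_nonneg fun i _ => sq_nonneg _)]
    exact strong_min W hWsymm hWnonneg hWone f hf m M hm hmM hd2 α hα xstar hmin _
  refine abs_le_of_sq_le_sq' ?h1 ?h2 |>.2
  case h2 => positivity
  case h1 =>
    rw [mul_pow, Real.sq_sqrt (div_nonneg (mul_nonneg zero_le_two (hV0 _)) hαm.le)]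
    have := mul_le_mul_of_nonneg_left (hEV t) (by positivity : 0 ≤ 2 / (α * m))
    calc _ ≤ _ := hJ.trans (hN.trans this)
      _ = _ := by ring
end
end

section
/- Let Q be a symmetric n×n real matrix, P a diagonal n×n matrix with positive diagonal entries p_1,…,p_n summing to 1, and for each i let Φ^i be the diagonal matrix with 1 in the (i,i) entry and 0 elsewhere. Then for any ε ∈ ℝ and any y ∈ ℝⁿ: Σᵢ pᵢ ‖(I − εP⁻¹Φ^i + εP⁻¹Φ^i Q) y‖² = ‖y‖² + yᵀ(−2ε(I − Q) + ε²(I − Q)P⁻¹(I − Q)) y, where ‖·‖ is the Euclidean norm. -/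
open Matrix BigOperators

noncomputable section

/-- The diagonal matrix `P⁻¹` with entries `(p i)⁻¹`. -/
def Pinv {n : ℕ} (p : Fin n → ℝ) : Matrix (Fin n) (Fin n) ℝ :=
  Matrix.diagonal (fun i => (p i)⁻¹)

/-- The activation matrix `Φ^i`: diagonal with a single `1` in position `(i,i)`. -/
def Phi {n : ℕ} (i : Fin n) : Matrix (Fin n) (Fin n) ℝ :=
  Matrix.diagonal (fun j => if j = i then (1 : ℝ) else 0)

/-- The exact expansion of the expected squared norm of the asynchronous map:
`Σᵢ pᵢ ‖(I − εP⁻¹Φ^i + εP⁻¹Φ^i Q)y‖² = ‖y‖² + yᵀ(−2ε(I−Q) + ε²(I−Q)P⁻¹(I−Q))y`. -/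
theorem stmt13 (n : ℕ) (hn : 1 ≤ n)
    (Q : Matrix (Fin n) (Fin n) ℝ) (hQ : Q.IsSymm)
    (p : Fin n → ℝ) (hp : ∀ i, 0 < p i) (hpsum : ∑ i, p i = 1)
    (ε : ℝ) (y : Fin n → ℝ) :
    ∑ i, p i *
        ∑ j, ((1 - ε • (Pinv p * Phi i) + ε • (Pinv p * Phi i * Q)).mulVec y) j ^ 2 =
      (∑ j, y j ^ 2) +
        y ⬝ᵥ (((-(2 * ε)) • (1 - Q)
          + (ε ^ 2) • ((1 - Q) * Pinv p * (1 - Q))).mulVec y) := by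
  set z : Fin n → ℝ := (1 - Q).mulVec y with hz
  have h1 : ∀ i j, ((1 - ε • (Pinv p * Phi i) + ε • (Pinv p * Phi i * Q)).mulVec y) j
      = y j - ε * (if j = i then (p j)⁻¹ * z j else 0) := by
    intro i j
    have e : (1 - ε • (Pinv p * Phi i) + ε • (Pinv p * Phi i * Q))
        = 1 - ε • (Pinv p * Phi i * (1 - Q)) := by
      rw [Matrix.mul_sub, Matrix.mul_one, smul_sub]; abel
    rw [e, Matrix.sub_mulVec, Matrix.smul_mulVec, ← Matrix.mulVec_mulVec, ← hz,
      Matrix.one_mulVec, Pinv, Phi, Matrix.diagonal_mul_diagonal]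
    simp [Matrix.mulVec_diagonal]
  have h2 : ∀ i, p i * ∑ j, ((1 - ε • (Pinv p * Phi i)
        + ε • (Pinv p * Phi i * Q)).mulVec y) j ^ 2
      = p i * (∑ j, y j ^ 2) + (-(2 * ε) * (y i * z i) + ε ^ 2 * (z i * ((p i)⁻¹ * z i))) := by
    intro i
    have h3 : ∀ j, ((1 - ε • (Pinv p * Phi i) + ε • (Pinv p * Phi i * Q)).mulVec y) j ^ 2
        = y j ^ 2 + (if j = i then
          (-(2 * ε) * (y j * ((p j)⁻¹ * z j)) + ε ^ 2 * ((p j)⁻¹ * z j) ^ 2) else 0) := by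
      intro j
      rw [h1]
      split_ifs <;> ring
    simp only [h3, Finset.sum_add_distrib, Finset.sum_ite_eq', Finset.mem_univ, if_true]
    have := (hp i).ne'
    field_simp
  have hS : (1 - Q)ᵀ = 1 - Q := by
    rw [Matrix.transpose_sub, Matrix.transpose_one, hQ.eq]
  have h4 : y ⬝ᵥ ((1 - Q) * Pinv p * (1 - Q)).mulVec y = ∑ i, z i * ((p i)⁻¹ * z i) := by
    rw [Matrix.mul_assoc, ← Matrix.mulVec_mulVec, Matrix.dotProduct_mulVec,
      ← Matrix.mulVec_transpose, hS, ← Matrix.mulVec_mulVec, ← hz, Pinv]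
    simp [dotProduct, Matrix.mulVec_diagonal]
  rw [Finset.sum_congr rfl (fun i _ => h2 i), Finset.sum_add_distrib, ← Finset.sum_mul, hpsum,
    one_mul, Matrix.add_mulVec, Matrix.smul_mulVec, Matrix.smul_mulVec, dotProduct_add,
    dotProduct_smul, dotProduct_smul, h4, ← hz, Finset.sum_add_distrib, ← Finset.mul_sum,
    ← Finset.mul_sum]
  rfl
end
end

section
/- Let Q be a symmetric n×n real matrix with 0 ⪯ Q ⪯ ρ²I for some 0 < ρ < 1, and let P be a diagonal matrix with diagonal entries p_i ≥ π > 0. Then for any ε > 0 and any y ∈ ℝⁿ: yᵀ(−2ε(I − Q) + ε²(I − Q)P⁻¹(I − Q)) y ≤ ε · max{ε/π − 2, ε(1−ρ²)²/π − 2(1−ρ²)} · ‖y‖², where ‖·‖ is the Euclidean norm. -/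
open Matrix BigOperators

noncomputable section

/-- For `0 ⪯ Q ⪯ ρ²I` and `P` diagonal with entries `≥ π`:
`yᵀ(−2ε(I−Q) + ε²(I−Q)P⁻¹(I−Q))y ≤ ε·max{ε/π − 2, ε(1−ρ²)²/π − 2(1−ρ²)}·‖y‖²`. -/
theorem stmt14 (n : ℕ) (hn : 1 ≤ n)
    (Q : Matrix (Fin n) (Fin n) ℝ)
    (ρ : ℝ) (hρ0 : 0 < ρ) (hρ1 : ρ < 1)
    (hQpsd : Q.PosSemidef)
    (hQub : ((ρ ^ 2) • (1 : Matrix (Fin n) (Fin n) ℝ) - Q).PosSemidef)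
    (p : Fin n → ℝ) (pmin : ℝ) (hpmin : 0 < pmin) (hp : ∀ i, pmin ≤ p i)
    (ε : ℝ) (hε : 0 < ε) (y : Fin n → ℝ) :
    y ⬝ᵥ (((-(2 * ε)) • (1 - Q)
        + (ε ^ 2) • ((1 - Q) * Pinv p * (1 - Q))).mulVec y) ≤
      ε * max (ε / pmin - 2) (ε * (1 - ρ ^ 2) ^ 2 / pmin - 2 * (1 - ρ ^ 2)) *
        ∑ i, y i ^ 2 := by
  set r : ℝ := ρ ^ 2 with hr
  have hr0 : 0 < r := by positivity
  have hsymm : ∀ u v : Fin n → ℝ, u ⬝ᵥ (Q *ᵥ v) = (Q *ᵥ u) ⬝ᵥ v := by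
    intro u v
    have hT : Qᵀ = Q := by
      have := hQpsd.isHermitian
      simpa [Matrix.IsHermitian, Matrix.conjTranspose_eq_transpose_of_trivial] using this
    rw [Matrix.dotProduct_mulVec, ← Matrix.mulVec_transpose, hT]
  have h1 : ∀ v : Fin n → ℝ, 0 ≤ v ⬝ᵥ (Q *ᵥ v) := by
    intro v
    simpa using hQpsd.dotProduct_mulVec_nonneg v
  have h2 : ∀ v : Fin n → ℝ, v ⬝ᵥ (Q *ᵥ v) ≤ r * (v ⬝ᵥ v) := by
    intro v
    have := hQub.dotProduct_mulVec_nonneg v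
    simp only [star_trivial, Matrix.sub_mulVec, Matrix.smul_mulVec, Matrix.one_mulVec,
      dotProduct_sub, dotProduct_smul, smul_eq_mul] at this
    linarith
  have hS : ∑ i, y i ^ 2 = y ⬝ᵥ y := by
    simp [dotProduct, pow_two]
  have hb : (Q *ᵥ y) ⬝ᵥ (Q *ᵥ y) ≤ r * (y ⬝ᵥ (Q *ᵥ y)) := by
    have e1 := h2 (Q *ᵥ y)
    have e2 := h1 (r • y - Q *ᵥ y)
    have e3 := hsymm y (Q *ᵥ y)
    simp only [Matrix.mulVec_sub, Matrix.mulVec_smul, dotProduct_sub, sub_dotProduct,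
      dotProduct_smul, smul_dotProduct, smul_eq_mul] at e2
    rw [e3] at e2
    have : 0 ≤ r * (r * (y ⬝ᵥ (Q *ᵥ y)) - (Q *ᵥ y) ⬝ᵥ (Q *ᵥ y)) := by nlinarith
    have := nonneg_of_mul_nonneg_right this hr0
    linarith
  have hP : y ⬝ᵥ (((1 - Q) * Pinv p * (1 - Q)) *ᵥ y)
      ≤ (y ⬝ᵥ y - 2 * (y ⬝ᵥ (Q *ᵥ y)) + (Q *ᵥ y) ⬝ᵥ (Q *ᵥ y)) / pmin := by
    have e : y ⬝ᵥ (((1 - Q) * Pinv p * (1 - Q)) *ᵥ y)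
        = (y - Q *ᵥ y) ⬝ᵥ (Pinv p *ᵥ (y - Q *ᵥ y)) := by
      rw [← Matrix.mulVec_mulVec, ← Matrix.mulVec_mulVec]
      simp only [Matrix.sub_mulVec, Matrix.one_mulVec]
      rw [dotProduct_sub, hsymm, sub_dotProduct]
    have e' : y ⬝ᵥ y - 2 * (y ⬝ᵥ (Q *ᵥ y)) + (Q *ᵥ y) ⬝ᵥ (Q *ᵥ y)
        = (y - Q *ᵥ y) ⬝ᵥ (y - Q *ᵥ y) := by
      simp only [dotProduct_sub, sub_dotProduct]
      rw [dotProduct_comm (Q *ᵥ y) y]; ring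
    rw [e, e']
    generalize y - Q *ᵥ y = w
    simp only [Pinv, dotProduct, Matrix.mulVec_diagonal]
    rw [Finset.sum_div]
    refine Finset.sum_le_sum fun i _ => ?_
    have : (p i)⁻¹ ≤ pmin⁻¹ := inv_anti₀ hpmin (hp i)
    rw [div_eq_mul_inv]
    nlinarith [mul_self_nonneg (w i), mul_le_mul_of_nonneg_left this (mul_self_nonneg (w i))]
  have ha0 := h1 y
  have haS := h2 y
  rw [hS]
  simp only [Matrix.add_mulVec, Matrix.smul_mulVec, dotProduct_add, dotProduct_smul, smul_eq_mul,
    Matrix.sub_mulVec (1 : Matrix (Fin n) (Fin n) ℝ) Q y, Matrix.one_mulVec, dotProduct_sub]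
  generalize y ⬝ᵥ (((1 - Q) * Pinv p * (1 - Q)) *ᵥ y) = T at *
  generalize (Q *ᵥ y) ⬝ᵥ (Q *ᵥ y) = b at *
  generalize y ⬝ᵥ (Q *ᵥ y) = a at *
  generalize y ⬝ᵥ y = S at *
  have hm1 := le_max_left (ε / pmin - 2) (ε * (1 - r) ^ 2 / pmin - 2 * (1 - r))
  have hm2 := le_max_right (ε / pmin - 2) (ε * (1 - r) ^ 2 / pmin - 2 * (1 - r))
  generalize max (ε / pmin - 2) (ε * (1 - r) ^ 2 / pmin - 2 * (1 - r)) = m at *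
  have hk : 0 < pmin⁻¹ := inv_pos.mpr hpmin
  simp only [div_eq_mul_inv] at *
  generalize pmin⁻¹ = k at *
  have hT : T ≤ (S - (2 - r) * a) * k :=
    hP.trans (mul_le_mul_of_nonneg_right (by linarith) hk.le)
  have key : -2 * (S - a) + ε * ((S - (2 - r) * a) * k) ≤ m * S := by
    have f1 := mul_le_mul_of_nonneg_right hm1 (sub_nonneg.mpr haS)
    have f2 := mul_le_mul_of_nonneg_right hm2 ha0
    have : 0 ≤ r * (m * S - (-2 * (S - a) + ε * ((S - (2 - r) * a) * k))) := by
      linear_combination f1 + f2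
    have := nonneg_of_mul_nonneg_right this hr0
    linarith
  have g1 := mul_le_mul_of_nonneg_left hT (sq_nonneg ε)
  have g2 := mul_le_mul_of_nonneg_left key hε.le
  linear_combination g1 + g2
end
end

section
/- Let Q be a symmetric n×n real matrix with 0 ⪯ Q ⪯ ρ²I for some 0 < ρ < 1, and let P be a diagonal matrix with positive diagonal entries p_1,…,p_n summing to 1 and satisfying p_i ≥ π > 0. If 0 < ε < 2π, then for every y ∈ ℝⁿ: Σᵢ pᵢ ‖(I − εP⁻¹Φ^i + εP⁻¹Φ^i Q) y‖ ≤ C₁ ‖y‖, where C₁ = (1 + ε·max{ε/π − 2, ε(1−ρ²)²/π − 2(1−ρ²)})^{1/2}, and moreover C₁ < 1. -/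
open Matrix BigOperators

noncomputable section

theorem aux_quad {n : ℕ} (M : Matrix (Fin n) (Fin n) ℝ) (h : M.PosSemidef) (x : Fin n → ℝ) :
    0 ≤ x ⬝ᵥ (M *ᵥ x) := by
  have := h.dotProduct_mulVec_nonneg x
  simpa using this

theorem aux_Q {n : ℕ} (Q : Matrix (Fin n) (Fin n) ℝ) (r : ℝ) (hr : 0 < r)
    (h1 : Q.PosSemidef) (h2 : (r • (1 : Matrix (Fin n) (Fin n) ℝ) - Q).PosSemidef)
    (y : Fin n → ℝ) :
    (Q *ᵥ y) ⬝ᵥ (Q *ᵥ y) ≤ r * (y ⬝ᵥ (Q *ᵥ y)) := by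
  have hsym : ∀ u v : Fin n → ℝ, u ⬝ᵥ (Q *ᵥ v) = (Q *ᵥ u) ⬝ᵥ v := by
    intro u v
    have hT : Qᵀ = Q := by
      have := h1.isHermitian.eq
      rwa [conjTranspose_eq_transpose_of_trivial] at this
    rw [dotProduct_mulVec, ← mulVec_transpose, hT]
  have a1 := aux_quad _ h2 (Q *ᵥ y)
  have a2 := aux_quad _ h1 (r • y - Q *ᵥ y)
  have e1 := hsym y (Q *ᵥ y)
  have e2 := hsym (Q *ᵥ y) y
  have e3 := dotProduct_comm y (Q *ᵥ y)
  have e4 := dotProduct_comm (Q *ᵥ y) (Q *ᵥ (Q *ᵥ y))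
  simp only [sub_mulVec, mulVec_sub, smul_mulVec, mulVec_smul, one_mulVec, dotProduct_sub,
    sub_dotProduct, dotProduct_smul, smul_dotProduct, smul_eq_mul] at a1 a2
  rw [e1] at a2
  have : 0 ≤ r * (r * (y ⬝ᵥ (Q *ᵥ y)) - (Q *ᵥ y) ⬝ᵥ (Q *ᵥ y)) := by nlinarith
  nlinarith [nonneg_of_mul_nonneg_right this hr]

theorem aux_norm {n : ℕ} (Q : Matrix (Fin n) (Fin n) ℝ) (p : Fin n → ℝ) (ε : ℝ)
    (y : Fin n → ℝ) (i : Fin n) :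
    ∑ j, ((1 - ε • (Pinv p * Phi i) + ε • (Pinv p * Phi i * Q)).mulVec y) j ^ 2 =
      ∑ j, y j ^ 2 - 2 * (ε * (p i)⁻¹) * (y i * (y i - (Q *ᵥ y) i))
        + (ε * (p i)⁻¹) ^ 2 * (y i - (Q *ᵥ y) i) ^ 2 := by
  have h : ∀ j, ((1 - ε • (Pinv p * Phi i) + ε • (Pinv p * Phi i * Q)).mulVec y) j ^ 2 =
      y j ^ 2 + if j = i then (- 2 * (ε * (p i)⁻¹) * (y i * (y i - (Q *ᵥ y) i))
        + (ε * (p i)⁻¹) ^ 2 * (y i - (Q *ᵥ y) i) ^ 2) else 0 := by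
    intro j
    have : ((1 - ε • (Pinv p * Phi i) + ε • (Pinv p * Phi i * Q)).mulVec y) j =
        y j - ε * ((p j)⁻¹ * (if j = i then 1 else 0) * y j)
          + ε * ((p j)⁻¹ * (if j = i then 1 else 0) * (Q *ᵥ y) j) := by
      simp only [Pinv, Phi, diagonal_mul_diagonal, add_mulVec, sub_mulVec, smul_mulVec,
        one_mulVec, ← mulVec_mulVec, Pi.add_apply, Pi.sub_apply, Pi.smul_apply, smul_eq_mul,
        mulVec_diagonal]
    rw [this]
    split_ifs with hj
    · subst hj; ring
    · ring
  simp_rw [h]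
  rw [Finset.sum_add_distrib]
  simp
  ring

/-- Expected contraction of the asynchronous map: for `0 < ε < 2π`,
`Σᵢ pᵢ ‖(I − εP⁻¹Φ^i + εP⁻¹Φ^i Q)y‖ ≤ C₁‖y‖` with
`C₁ = (1 + ε·max{ε/π − 2, ε(1−ρ²)²/π − 2(1−ρ²)})^{1/2} < 1`. -/
theorem stmt15 (n : ℕ) (hn : 1 ≤ n)
    (Q : Matrix (Fin n) (Fin n) ℝ)
    (ρ : ℝ) (hρ0 : 0 < ρ) (hρ1 : ρ < 1)
    (hQpsd : Q.PosSemidef)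
    (hQub : ((ρ ^ 2) • (1 : Matrix (Fin n) (Fin n) ℝ) - Q).PosSemidef)
    (p : Fin n → ℝ) (pmin : ℝ) (hpmin : 0 < pmin) (hp : ∀ i, pmin ≤ p i)
    (hppos : ∀ i, 0 < p i) (hpsum : ∑ i, p i = 1)
    (ε : ℝ) (hε : 0 < ε) (hεlt : ε < 2 * pmin)
    (C1 : ℝ)
    (hC1 : C1 = Real.sqrt
      (1 + ε * max (ε / pmin - 2) (ε * (1 - ρ ^ 2) ^ 2 / pmin - 2 * (1 - ρ ^ 2)))) :
    C1 < 1 ∧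
    ∀ y : Fin n → ℝ,
      ∑ i, p i * _root_.enorm ((1 - ε • (Pinv p * Phi i) + ε • (Pinv p * Phi i * Q)).mulVec y) ≤
        C1 * _root_.enorm y := by
  have hr : 0 < ρ ^ 2 := by positivity
  have hr1 : ρ ^ 2 < 1 := by nlinarith
  have hk : ε / pmin < 2 := by rw [div_lt_iff₀ hpmin]; exact hεlt
  have hk0 : 0 < ε / pmin := by positivity
  have hre : ε * (1 - ρ ^ 2) ^ 2 / pmin = ε / pmin * (1 - ρ ^ 2) ^ 2 := by ring
  rw [hre] at hC1
  generalize ρ ^ 2 = r at *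
  constructor
  · rw [hC1, Real.sqrt_lt' one_pos]
    have : max (ε / pmin - 2) (ε / pmin * (1 - r) ^ 2 - 2 * (1 - r)) < 0 := by
      apply max_lt
      · linarith
      · have : 0 < (1 - r) * (2 - ε / pmin * (1 - r)) := by
          apply mul_pos <;> nlinarith
        nlinarith
    nlinarith
  intro y
  set m := max (ε / pmin - 2) (ε / pmin * (1 - r) ^ 2 - 2 * (1 - r)) with hm
  have hm1 : ε / pmin - 2 ≤ m := le_max_left _ _
  have hm2 : ε / pmin * (1 - r) ^ 2 - 2 * (1 - r) ≤ m := le_max_right _ _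
  have hY0 : 0 ≤ ∑ j, y j ^ 2 := Finset.sum_nonneg fun _ _ => sq_nonneg _
  have q1 := aux_Q Q r hr hQpsd hQub y
  have q2 := aux_quad _ hQpsd y
  have q3 := aux_quad _ hQub y
  simp only [sub_mulVec, smul_mulVec, one_mulVec, dotProduct_sub, dotProduct_smul,
    smul_eq_mul] at q3
  have hYY : y ⬝ᵥ y = ∑ j, y j ^ 2 := by simp [dotProduct, sq]
  rw [hYY] at q3
  have hs : ∑ i, y i * (y i - (Q *ᵥ y) i) = ∑ j, y j ^ 2 - y ⬝ᵥ (Q *ᵥ y) := by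
    rw [← hYY]; simp [dotProduct, mul_sub]
  have hz : ∑ i, (y i - (Q *ᵥ y) i) ^ 2 =
      ∑ j, y j ^ 2 - 2 * (y ⬝ᵥ (Q *ᵥ y)) + (Q *ᵥ y) ⬝ᵥ (Q *ᵥ y) := by
    rw [← hYY]
    simp only [dotProduct, Finset.mul_sum]
    rw [← Finset.sum_sub_distrib, ← Finset.sum_add_distrib]
    exact Finset.sum_congr rfl fun i _ => by ring
  set Y := ∑ j, y j ^ 2 with hY
  set t := y ⬝ᵥ (Q *ᵥ y)
  set W := (Q *ᵥ y) ⬝ᵥ (Q *ᵥ y)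
  have key : ∑ i, p i * (Y - 2 * (ε * (p i)⁻¹) * (y i * (y i - (Q *ᵥ y) i))
        + (ε * (p i)⁻¹) ^ 2 * (y i - (Q *ᵥ y) i) ^ 2) ≤ (1 + ε * m) * Y := by
    have step : ∑ i, p i * (Y - 2 * (ε * (p i)⁻¹) * (y i * (y i - (Q *ᵥ y) i))
        + (ε * (p i)⁻¹) ^ 2 * (y i - (Q *ᵥ y) i) ^ 2) ≤
        ∑ i, (p i * Y - 2 * ε * (y i * (y i - (Q *ᵥ y) i))
          + ε * (ε / pmin) * (y i - (Q *ᵥ y) i) ^ 2) := by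
      apply Finset.sum_le_sum
      intro i _
      have hpi := hppos i
      have e : p i * (Y - 2 * (ε * (p i)⁻¹) * (y i * (y i - (Q *ᵥ y) i))
        + (ε * (p i)⁻¹) ^ 2 * (y i - (Q *ᵥ y) i) ^ 2) =
          p i * Y - 2 * ε * (y i * (y i - (Q *ᵥ y) i))
          + ε * (ε / p i) * (y i - (Q *ᵥ y) i) ^ 2 := by
        field_simp
      rw [e]
      have := hp i
      gcongr
    refine step.trans ?_
    rw [Finset.sum_add_distrib, Finset.sum_sub_distrib, ← Finset.sum_mul, ← Finset.mul_sum,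
      ← Finset.mul_sum, hpsum, hs, hz]
    suffices h : ε / pmin * (Y - 2 * t + W) - 2 * (Y - t) ≤ m * Y by nlinarith
    generalize ε / pmin = k at *
    have h1 : k * (Y - 2 * t + W) ≤ k * (Y - 2 * t + r * t) := by gcongr
    have h2 : r * (k * (Y - 2 * t + r * t) - 2 * (Y - t)) ≤ r * (m * Y) := by
      have b1 : (k - 2) * (r * Y - t) ≤ m * (r * Y - t) :=
        mul_le_mul_of_nonneg_right hm1 q3
      have b2 := mul_le_mul_of_nonneg_right hm2 q2
      nlinarith
    have h3 := le_of_mul_le_mul_left h2 hr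
    linarith
  have hnorm : ∀ i, _root_.enorm
      ((1 - ε • (Pinv p * Phi i) + ε • (Pinv p * Phi i * Q)).mulVec y) ^ 2 =
      Y - 2 * (ε * (p i)⁻¹) * (y i * (y i - (Q *ᵥ y) i))
        + (ε * (p i)⁻¹) ^ 2 * (y i - (Q *ᵥ y) i) ^ 2 := by
    intro i
    rw [_root_.enorm, Real.sq_sqrt (Finset.sum_nonneg fun _ _ => sq_nonneg _), aux_norm]
  simp_rw [← hnorm] at key
  have hfin : C1 * _root_.enorm y = Real.sqrt ((1 + ε * m) * Y) := by
    rw [hC1, _root_.enorm, Real.sqrt_mul' _ hY0]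
  rw [hfin]
  apply Real.le_sqrt_of_sq_le
  refine le_trans ?_ key
  have cs := Finset.sum_sq_le_sum_mul_sum_of_sq_eq_mul Finset.univ
    (r := fun i => p i * _root_.enorm
      ((1 - ε • (Pinv p * Phi i) + ε • (Pinv p * Phi i * Q)).mulVec y))
    (f := p) (g := fun i => p i * _root_.enorm
      ((1 - ε • (Pinv p * Phi i) + ε • (Pinv p * Phi i * Q)).mulVec y) ^ 2)
    (fun i _ => (hppos i).le) (fun i _ => mul_nonneg (hppos i).le (sq_nonneg _))
    (fun i _ => by ring)
  rwa [hpsum, one_mul] at cs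
end
end

section
/- Suppose each f_i'' is L-Lipschitz and 0 < ε < min{1/2, 2π(λ/Λ)²}. Let x̄ ∈ ℝⁿ, let j be any index, and let x = x̄^(j) be one asynchronous update of x̄. Then the expected weighted error after one further update of x satisfies Σᵢ pᵢ ‖D(x)^{1/2}(x^(i) − x*)‖ ≤ [( (2(1−δ)+αM)^{1/2} αLεΛ )/( 2π(2(1−Δ)+αm) )] · ‖D(x̄)^{1/2}(x − x*)‖² + C₁ (1 + C₂‖g(x̄)‖^{1/2}) ‖D(x̄)^{1/2}(x − x*)‖, where C₁ = (1 + ε·max{ε/π − 2, ε(1−ρ²)²/π − 2(1−ρ²)})^{1/2} and C₂ = (εαLΛ/(π(2(1−Δ)+αm)))^{1/2}. -/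
open Matrix BigOperators

noncomputable section

/-- Euclidean norm on `ℝⁿ`. -/
def euclNorm {n : ℕ} (v : Fin n → ℝ) : ℝ := Real.sqrt (∑ i, v i ^ 2)


theorem en_eq {n : ℕ} (v : Fin n → ℝ) : euclNorm v = ‖WithLp.toLp 2 v‖ := by
  simp [euclNorm, EuclideanSpace.norm_eq]

theorem en_nonneg {n : ℕ} (v : Fin n → ℝ) : 0 ≤ euclNorm v := Real.sqrt_nonneg _

theorem en_sq {n : ℕ} (v : Fin n → ℝ) : euclNorm v ^ 2 = ∑ i, v i ^ 2 :=
  Real.sq_sqrt (Finset.sum_nonneg fun i _ => sq_nonneg _)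

theorem en_add {n : ℕ} (v w : Fin n → ℝ) : euclNorm (v + w) ≤ euclNorm v + euclNorm w := by
  simp only [en_eq]
  exact norm_add_le (WithLp.toLp 2 v) (WithLp.toLp 2 w)

theorem en_sub {n : ℕ} (v w : Fin n → ℝ) : euclNorm (v - w) ≤ euclNorm v + euclNorm w := by
  simp only [en_eq]
  exact norm_sub_le (WithLp.toLp 2 v) (WithLp.toLp 2 w)

theorem en_single {n : ℕ} (i : Fin n) (c : ℝ) : euclNorm (Pi.single i c) = |c| := by
  rw [euclNorm, ← Real.sqrt_sq_eq_abs]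
  congr 1
  rw [Finset.sum_eq_single i]
  · simp
  · intro b _ hb; simp [hb]
  · simp

theorem en_le {n : ℕ} (v : Fin n → ℝ) (c : ℝ) (hc : 0 ≤ c) (h : ∑ i, v i ^ 2 ≤ c ^ 2) :
    euclNorm v ≤ c := by
  rw [euclNorm]; exact Real.sqrt_le_iff.2 ⟨hc, h⟩

theorem en_mono {n : ℕ} (v w : Fin n → ℝ) (c : ℝ) (hc : 0 ≤ c) (h : ∀ i, |v i| ≤ c * |w i|) :
    euclNorm v ≤ c * euclNorm w := by
  apply en_le _ _ (mul_nonneg hc (en_nonneg _))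
  rw [mul_pow, en_sq, Finset.mul_sum]
  refine Finset.sum_le_sum fun i _ => ?_
  have := pow_le_pow_left₀ (abs_nonneg _) (h i) 2
  rwa [mul_pow, sq_abs, sq_abs] at this

theorem abs_le_en {n : ℕ} (v : Fin n → ℝ) (i : Fin n) : |v i| ≤ euclNorm v := by
  rw [← Real.sqrt_sq_eq_abs, euclNorm]
  exact Real.sqrt_le_sqrt (Finset.single_le_sum (f := fun i => v i ^ 2) (fun i _ => sq_nonneg _) (Finset.mem_univ i))

theorem taylor_lip (h : ℝ → ℝ) (hd : Differentiable ℝ h) (L : ℝ)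
    (hL : ∀ s s', |deriv h s - deriv h s'| ≤ L * |s - s'|) (a b : ℝ) :
    |h b - h a - deriv h a * (b - a)| ≤ L / 2 * (b - a) ^ 2 := by
  have hder : ∀ t : ℝ, HasDerivAt (fun t : ℝ => h (a + t * (b - a)) - h a - deriv h a * (t * (b - a)))
      (deriv h (a + t * (b - a)) * (b - a) - deriv h a * (b - a)) t := by
    intro t
    have h1 : HasDerivAt (fun t : ℝ => t * (b - a)) (b - a) t := by
      simpa using (hasDerivAt_id t).mul_const (b - a)
    have h2 : HasDerivAt (fun t : ℝ => a + t * (b - a)) (b - a) t := h1.const_add a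
    have h3 := (hd (a + t * (b - a))).hasDerivAt.comp t h2
    exact (h3.sub_const _).sub (h1.const_mul _)
  have hB : ∀ t : ℝ, HasDerivAt (fun t : ℝ => L / 2 * (b - a) ^ 2 * t ^ 2) (L * (b - a) ^ 2 * t) t := by
    intro t
    have := (hasDerivAt_pow 2 t).const_mul (L / 2 * (b - a) ^ 2)
    exact this.congr_deriv (by simp; ring)
  have key := image_norm_le_of_norm_deriv_right_le_deriv_boundary (a := (0:ℝ)) (b := 1)
    (f := fun t : ℝ => h (a + t * (b - a)) - h a - deriv h a * (t * (b - a)))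
    (fun t _ => (hder t).continuousAt.continuousWithinAt)
    (fun t _ => (hder t).hasDerivWithinAt) (by simp) hB
    (by
      intro t ht
      rw [← sub_mul, Real.norm_eq_abs, abs_mul]
      calc _ ≤ L * |a + t * (b - a) - a| * |b - a| :=
            mul_le_mul_of_nonneg_right (hL _ _) (abs_nonneg _)
        _ = L * (b - a) ^ 2 * t := by
            rw [add_sub_cancel_left, abs_mul, abs_of_nonneg ht.1, ← sq_abs (b - a)]; ring)
    (Set.right_mem_Icc.2 zero_le_one)
  simpa using key

/-- Schur test. -/
theorem schur {n : ℕ} (B : Matrix (Fin n) (Fin n) ℝ) (hB : ∀ i j, 0 ≤ B i j)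
    (hs : ∀ i j, B i j = B j i) (s : Fin n → ℝ) (hs0 : ∀ i, 0 < s i) (ρ : ℝ) (hρ : 0 ≤ ρ)
    (hrow : ∀ i, ∑ j, B i j ≤ ρ * s i ^ 2) (v : Fin n → ℝ) :
    euclNorm ((diagonal (fun i => (s i)⁻¹) * B * diagonal (fun i => (s i)⁻¹)) *ᵥ v)
      ≤ ρ * euclNorm v := by
  apply en_le _ _ (mul_nonneg hρ (en_nonneg _))
  have hE : ∀ i, ((diagonal (fun i => (s i)⁻¹) * B * diagonal (fun i => (s i)⁻¹)) *ᵥ v) i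
      = (s i)⁻¹ * ∑ j, B i j * ((s j)⁻¹ * v j) := by
    intro i
    rw [← mulVec_mulVec, ← mulVec_mulVec, mulVec_diagonal]
    simp [mulVec, dotProduct, diagonal_apply]
  have hi : ∀ i, (((diagonal (fun i => (s i)⁻¹) * B * diagonal (fun i => (s i)⁻¹)) *ᵥ v) i) ^ 2
      ≤ ρ * ∑ j, B i j * ((s j)⁻¹ * v j) ^ 2 := by
    intro i
    rw [hE, mul_pow]
    have hcs : (∑ j, B i j * ((s j)⁻¹ * v j)) ^ 2
        ≤ (∑ j, B i j) * ∑ j, B i j * ((s j)⁻¹ * v j) ^ 2 := by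
      refine Finset.sum_sq_le_sum_mul_sum_of_sq_le_mul _ (fun j _ => hB i j)
        (fun j _ => mul_nonneg (hB i j) (sq_nonneg _)) (fun j _ => le_of_eq (by ring))
    have hnn : 0 ≤ ∑ j, B i j * ((s j)⁻¹ * v j) ^ 2 :=
      Finset.sum_nonneg fun j _ => mul_nonneg (hB i j) (sq_nonneg _)
    calc _ ≤ (s i)⁻¹ ^ 2 * ((ρ * s i ^ 2) * ∑ j, B i j * ((s j)⁻¹ * v j) ^ 2) := by
          refine mul_le_mul_of_nonneg_left (hcs.trans ?_) (sq_nonneg _)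
          exact mul_le_mul_of_nonneg_right (hrow i) hnn
      _ = _ := by
          have := (hs0 i).ne'
          field_simp
  refine (Finset.sum_le_sum fun i _ => hi i).trans ?_
  have e2 : (ρ * euclNorm v) ^ 2 = ρ * ∑ j, ρ * v j ^ 2 := by
    rw [mul_pow, en_sq, ← Finset.mul_sum]; ring
  rw [← Finset.mul_sum, Finset.sum_comm, e2]
  refine mul_le_mul_of_nonneg_left (Finset.sum_le_sum fun j _ => ?_) hρ
  rw [← Finset.sum_mul]
  have : ∑ i, B i j = ∑ i, B j i := Finset.sum_congr rfl fun i _ => hs i j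
  rw [this]
  calc _ ≤ (ρ * s j ^ 2) * ((s j)⁻¹ * v j) ^ 2 := mul_le_mul_of_nonneg_right (hrow j) (sq_nonneg _)
    _ = _ := by
          have := (hs0 j).ne'
          field_simp

theorem grad_zero {n : ℕ} (W : Matrix (Fin n) (Fin n) ℝ) (hW : W.IsSymm)
    (f : Fin n → ℝ → ℝ) (hf : ∀ i, Differentiable ℝ (f i)) (α : ℝ) (x : Fin n → ℝ)
    (hmin : ∀ y, Fobj W f α x ≤ Fobj W f α y) : gvec W f α x = 0 := by
  funext i
  have hA : (1 - W).IsSymm := by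
    rw [Matrix.IsSymm, transpose_sub, transpose_one, hW]
  have hF : ∀ t : ℝ, Fobj W f α (x + Pi.single i t) = (1 / 2) * (x ⬝ᵥ ((1 - W).mulVec x))
      + t * ((1 - W) *ᵥ x) i + t ^ 2 * ((1 / 2) * (1 - W) i i)
      + (α * ∑ k, (f k (x k + (Pi.single i t : Fin n → ℝ) k))) := by
    intro t
    have h1 : x ⬝ᵥ ((1 - W) *ᵥ Pi.single i t) = t * ((1 - W) *ᵥ x) i := by
      rw [dotProduct_mulVec, ← mulVec_transpose, hA, dotProduct_single, mul_comm]
    have h2 : (Pi.single i t : Fin n → ℝ) ⬝ᵥ ((1 - W) *ᵥ x) = t * ((1 - W) *ᵥ x) i := by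
      rw [single_dotProduct]
    have h3 : (Pi.single i t : Fin n → ℝ) ⬝ᵥ ((1 - W) *ᵥ Pi.single i t) = t ^ 2 * (1 - W) i i := by
      rw [single_dotProduct, mulVec_single]; simp; ring
    simp only [Fobj, mulVec_add, add_dotProduct, dotProduct_add, h1, h2, h3, Pi.add_apply]
    ring
  have hd : HasDerivAt (fun t : ℝ => Fobj W f α (x + Pi.single i t)) (gvec W f α x i) 0 := by
    have hs : HasDerivAt (fun t : ℝ => ∑ k, (f k (x k + (Pi.single i t : Fin n → ℝ) k)))
        (∑ k, (Pi.single i (deriv (f i) (x i)) : Fin n → ℝ) k) 0 := by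
      refine HasDerivAt.fun_sum fun k _ => ?_
      by_cases hk : k = i
      · subst hk
        simp only [Pi.single_eq_same]
        have := (hf k (x k + 0)).hasDerivAt.comp (0:ℝ) ((hasDerivAt_id (0:ℝ)).const_add (x k))
        exact (this.congr_deriv (by simp))
      · simp only [Pi.single_eq_of_ne hk]
        exact hasDerivAt_const _ _
    have h1 : HasDerivAt (fun t : ℝ => (1 / 2) * (x ⬝ᵥ ((1 - W).mulVec x))
      + t * ((1 - W) *ᵥ x) i + t ^ 2 * ((1 / 2) * (1 - W) i i)) (((1 - W) *ᵥ x) i) 0 := by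
      have a := ((hasDerivAt_id (0:ℝ)).mul_const (((1 - W) *ᵥ x) i)).const_add
        ((1 / 2) * (x ⬝ᵥ ((1 - W).mulVec x)))
      have b := ((hasDerivAt_id (0:ℝ)).pow 2).mul_const ((1 / 2) * (1 - W) i i)
      exact (a.add b).congr_deriv (by simp)
    have := h1.add (hs.const_mul α)
    simp only [hF]
    exact this.congr_deriv (by simp [gvec])
  have hm : IsLocalMin (fun t : ℝ => Fobj W f α (x + Pi.single i t)) 0 :=
    Filter.Eventually.of_forall fun t => by simpa using hmin _
  exact hm.hasDerivAt_eq_zero hd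

/-- Abstract one-step linear contraction. -/
theorem contraction {n : ℕ} (E : Matrix (Fin n) (Fin n) ℝ) (hE : E.IsSymm) (ρ : ℝ) (hρ : 0 ≤ ρ)
    (hEb : ∀ v, euclNorm (E *ᵥ v) ≤ ρ * euclNorm v) (p : Fin n → ℝ) (pm : ℝ) (hpm : 0 < pm)
    (hp : ∀ i, pm ≤ p i) (hps : ∑ i, p i = 1) (ε : ℝ) (hε : 0 < ε) (y : Fin n → ℝ) :
    ∑ i, p i * euclNorm (y - Pi.single i (ε / p i * (y - E *ᵥ (E *ᵥ y)) i)) ≤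
      Real.sqrt (1 + ε * max (ε / pm - 2) (ε * (1 - ρ ^ 2) ^ 2 / pm - 2 * (1 - ρ ^ 2)))
        * euclNorm y := by
  set z := y - E *ᵥ (E *ᵥ y) with hz
  have hp0 : ∀ i, 0 < p i := fun i => hpm.trans_le (hp i)
  set c := (1 + ε * max (ε / pm - 2) (ε * (1 - ρ ^ 2) ^ 2 / pm - 2 * (1 - ρ ^ 2))) with hc
  have hJ : (∑ i, p i * euclNorm (y - Pi.single i (ε / p i * z i))) ^ 2 ≤
      ∑ i, p i * euclNorm (y - Pi.single i (ε / p i * z i)) ^ 2 := by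
    have := Finset.sum_sq_le_sum_mul_sum_of_sq_le_mul Finset.univ
      (r := fun i => p i * euclNorm (y - Pi.single i (ε / p i * z i)))
      (f := p) (g := fun i => p i * euclNorm (y - Pi.single i (ε / p i * z i)) ^ 2)
      (fun i _ => (hp0 i).le) (fun i _ => mul_nonneg (hp0 i).le (sq_nonneg _))
      (fun i _ => le_of_eq (by ring))
    rwa [hps, one_mul] at this
  have hn : ∀ i, p i * euclNorm (y - Pi.single i (ε / p i * z i)) ^ 2 ≤
      p i * euclNorm y ^ 2 - 2 * ε * (y i * z i) + ε ^ 2 / pm * z i ^ 2 := by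
    intro i
    have h1 : euclNorm (y - Pi.single i (ε / p i * z i)) ^ 2 =
        euclNorm y ^ 2 - 2 * (ε / p i * z i) * y i + (ε / p i * z i) ^ 2 := by
      rw [en_sq, en_sq]
      have : ∀ k, (y - Pi.single i (ε / p i * z i) : Fin n → ℝ) k ^ 2 = y k ^ 2 +
        (Pi.single i (- 2 * (ε / p i * z i) * y i + (ε / p i * z i) ^ 2) : Fin n → ℝ) k := by
        intro k
        by_cases hk : k = i
        · subst hk; simp; ring
        · simp [hk]
      simp only [this, Finset.sum_add_distrib, Finset.sum_pi_single', Finset.mem_univ, if_true]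
      simp
      ring
    rw [h1]
    have h2 : p i * (euclNorm y ^ 2 - 2 * (ε / p i * z i) * y i + (ε / p i * z i) ^ 2)
        = p i * euclNorm y ^ 2 - 2 * ε * (y i * z i) + ε ^ 2 / p i * z i ^ 2 := by
      have := (hp0 i).ne'
      field_simp
    rw [h2]
    have : ε ^ 2 / p i ≤ ε ^ 2 / pm := div_le_div_of_nonneg_left (sq_nonneg _) hpm (hp i)
    have := mul_le_mul_of_nonneg_right this (sq_nonneg (z i))
    linarith
  have hS : ∑ i, p i * euclNorm (y - Pi.single i (ε / p i * z i)) ^ 2 ≤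
      euclNorm y ^ 2 - 2 * ε * (y ⬝ᵥ z) + ε ^ 2 / pm * euclNorm z ^ 2 := by
    refine (Finset.sum_le_sum fun i _ => hn i).trans (le_of_eq ?_)
    rw [Finset.sum_add_distrib, Finset.sum_sub_distrib, ← Finset.sum_mul, hps, one_mul,
      ← Finset.mul_sum, ← Finset.mul_sum, en_sq z]
    rfl
  have hdot : ∀ v : Fin n → ℝ, v ⬝ᵥ v = euclNorm v ^ 2 := by
    intro v; rw [en_sq, dotProduct]; exact Finset.sum_congr rfl fun i _ => (sq _).symm
  have hq : y ⬝ᵥ (E *ᵥ (E *ᵥ y)) = euclNorm (E *ᵥ y) ^ 2 := by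
    rw [dotProduct_mulVec, ← mulVec_transpose, hE, hdot]
  have hyz : y ⬝ᵥ z = euclNorm y ^ 2 - euclNorm (E *ᵥ y) ^ 2 := by
    rw [hz, dotProduct_sub, hq, hdot]
  have hzz : euclNorm z ^ 2 = euclNorm y ^ 2 - 2 * euclNorm (E *ᵥ y) ^ 2
      + euclNorm (E *ᵥ (E *ᵥ y)) ^ 2 := by
    rw [← hdot z, hz, dotProduct_sub, sub_dotProduct, sub_dotProduct, hq, dotProduct_comm (E *ᵥ (E *ᵥ y)) y, hq,
      hdot, hdot]
    ring
  have hq1 : euclNorm (E *ᵥ y) ^ 2 ≤ ρ ^ 2 * euclNorm y ^ 2 := by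
    rw [← mul_pow]; exact pow_le_pow_left₀ (en_nonneg _) (hEb _) 2
  have hs1 : euclNorm (E *ᵥ (E *ᵥ y)) ^ 2 ≤ ρ ^ 2 * euclNorm (E *ᵥ y) ^ 2 := by
    rw [← mul_pow]; exact pow_le_pow_left₀ (en_nonneg _) (hEb _) 2
  have hfin : euclNorm y ^ 2 - 2 * ε * (y ⬝ᵥ z) + ε ^ 2 / pm * euclNorm z ^ 2
      ≤ c * euclNorm y ^ 2 := by
    rw [hyz, hzz]
    have hY := sq_nonneg (euclNorm y)
    have hq0 := sq_nonneg (euclNorm (E *ᵥ y))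
    generalize euclNorm y ^ 2 = Y at *
    generalize euclNorm (E *ᵥ y) ^ 2 = q at *
    generalize euclNorm (E *ᵥ (E *ᵥ y)) ^ 2 = s at *
    have hk : 0 ≤ ε ^ 2 / pm := by positivity
    have hks := mul_le_mul_of_nonneg_left hs1 hk
    have hA : ε * (ε / pm - 2) ≤ c - 1 := by
      have := mul_le_mul_of_nonneg_left
        (le_max_left (ε / pm - 2) (ε * (1 - ρ ^ 2) ^ 2 / pm - 2 * (1 - ρ ^ 2))) hε.le
      linarith
    have hB : ε * (ε * (1 - ρ ^ 2) ^ 2 / pm - 2 * (1 - ρ ^ 2)) ≤ c - 1 := by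
      have := mul_le_mul_of_nonneg_left
        (le_max_right (ε / pm - 2) (ε * (1 - ρ ^ 2) ^ 2 / pm - 2 * (1 - ρ ^ 2))) hε.le
      linarith
    have hA' : -2 * ε + ε ^ 2 / pm ≤ c - 1 := by
      convert hA using 1; ring
    have hB' : -2 * ε * (1 - ρ ^ 2) + ε ^ 2 / pm * (1 - ρ ^ 2) ^ 2 ≤ c - 1 := by
      convert hB using 1; ring
    generalize ε ^ 2 / pm = k at *
    generalize c = c at *
    -- linear in q on the interval from 0 to ρ² Y
    by_cases hsl : 2 * ε - 2 * k + k * ρ ^ 2 ≤ 0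
    · have h1 := mul_nonpos_of_nonpos_of_nonneg hsl hq0
      nlinarith [mul_le_mul_of_nonneg_right hA' hY]
    · have h1 := mul_le_mul_of_nonneg_left hq1 (not_le.1 hsl).le
      nlinarith [mul_le_mul_of_nonneg_right hB' hY]
  have hall := hJ.trans (hS.trans hfin)
  have := Real.le_sqrt_of_sq_le hall
  rwa [Real.sqrt_mul' _ (sq_nonneg _), Real.sqrt_sq (en_nonneg _)] at this

/-- The symmetrized iteration matrix `D^{-1/2} B D^{-1/2}`. -/
def Emat {n : ℕ} (W : Matrix (Fin n) (Fin n) ℝ) (f : Fin n → ℝ → ℝ) (α : ℝ)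
    (x : Fin n → ℝ) : Matrix (Fin n) (Fin n) ℝ :=
  Dinvhalf W f α x * Bmat W * Dinvhalf W f α x

theorem Bmat_apply {n : ℕ} (W : Matrix (Fin n) (Fin n) ℝ) (i j : Fin n) :
    Bmat W i j = if i = j then 1 - W i i else W i j := by
  by_cases h : i = j
  · subst h; simp [Bmat]; ring
  · simp [Bmat, h]

theorem Bmat_symm {n : ℕ} (W : Matrix (Fin n) (Fin n) ℝ) (hW : W.IsSymm) : (Bmat W).IsSymm := by
  rw [Matrix.IsSymm, Bmat, transpose_add, transpose_sub, transpose_smul, transpose_one,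
    diagonal_transpose, hW]

theorem Bmat_row {n : ℕ} (W : Matrix (Fin n) (Fin n) ℝ)
    (hWone : W.mulVec (fun _ => 1) = fun _ => 1) (i : Fin n) :
    ∑ j, Bmat W i j = 2 * (1 - W i i) := by
  have h : ∑ j, W i j = 1 := by
    have := congrFun hWone i
    simpa [mulVec, dotProduct] using this
  have h2 : ∀ j, Bmat W i j = (Pi.single i (1 - 2 * W i i) : Fin n → ℝ) j + W i j := by
    intro j
    rw [Bmat_apply]
    by_cases hj : i = j
    · subst hj; simp; ring
    · simp [hj, Pi.single_eq_of_ne (Ne.symm hj)]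
  simp only [h2, Finset.sum_add_distrib, h]
  simp; ring

theorem Emat_symm {n : ℕ} (W : Matrix (Fin n) (Fin n) ℝ) (hW : W.IsSymm) (f : Fin n → ℝ → ℝ)
    (α : ℝ) (x : Fin n → ℝ) : (Emat W f α x).IsSymm := by
  rw [Matrix.IsSymm, Emat, transpose_mul, transpose_mul, Bmat_symm W hW, Dinvhalf,
    diagonal_transpose, Matrix.mul_assoc]

theorem Emat_bound {n : ℕ} (W : Matrix (Fin n) (Fin n) ℝ) (hWsymm : W.IsSymm)
    (hWnonneg : ∀ i j, 0 ≤ W i j) (hWlt : ∀ i j, W i j < 1)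
    (hWone : W.mulVec (fun _ => 1) = fun _ => 1)
    (f : Fin n → ℝ → ℝ) (α : ℝ) (x : Fin n → ℝ) (hd : ∀ i, 0 < dEntry W f α x i)
    (ρ : ℝ) (hρ : 0 ≤ ρ) (h : ∀ i, 2 * (1 - W i i) ≤ ρ * dEntry W f α x i) (v : Fin n → ℝ) :
    euclNorm (Emat W f α x *ᵥ v) ≤ ρ * euclNorm v := by
  refine schur (Bmat W) ?_ (fun i j => ((Bmat_symm W hWsymm).apply i j).symm) (fun i => Real.sqrt (dEntry W f α x i))
    (fun i => Real.sqrt_pos.2 (hd i)) ρ hρ ?_ v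
  · intro i j
    rw [Bmat_apply]
    split_ifs
    · linarith [hWlt i i]
    · exact hWnonneg i j
  · intro i
    rw [Bmat_row W hWone, Real.sq_sqrt (hd i).le]
    exact h i

theorem Hhat_decomp {n : ℕ} (W : Matrix (Fin n) (Fin n) ℝ) (f : Fin n → ℝ → ℝ) (α : ℝ)
    (x xs : Fin n → ℝ) (hd : ∀ i, 0 < dEntry W f α x i) (hg : gvec W f α xs = 0)
    (r : Fin n → ℝ) (hr : ∀ i, r i = α * (deriv (f i) (x i) - deriv (f i) (xs i)
      - d2 f i (x i) * (x i - xs i))) (y q : Fin n → ℝ)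
    (hy : y = Dhalf W f α x *ᵥ (x - xs)) (hq : q = Dinvhalf W f α x *ᵥ r) :
    Dhalf W f α x *ᵥ (Hhatinv W f α x *ᵥ gvec W f α x) =
      (y - Emat W f α x *ᵥ (Emat W f α x *ᵥ y)) + (q + Emat W f α x *ᵥ q) := by
  have hs : ∀ i, Real.sqrt (dEntry W f α x i) ≠ 0 := fun i => (Real.sqrt_pos.2 (hd i)).ne'
  have hHP : Dhalf W f α x * Dinvhalf W f α x = 1 := by
    rw [Dhalf, Dinvhalf, diagonal_mul_diagonal, ← diagonal_one]
    congr 1; funext i; exact mul_inv_cancel₀ (hs i)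
  have hPH : Dinvhalf W f α x * Dhalf W f α x = 1 := by
    rw [Dhalf, Dinvhalf, diagonal_mul_diagonal, ← diagonal_one]
    congr 1; funext i; exact inv_mul_cancel₀ (hs i)
  have hHH : Dmat W f α x = Dhalf W f α x * Dhalf W f α x := by
    rw [Dhalf, Dmat, diagonal_mul_diagonal]
    congr 1; funext i; exact (Real.mul_self_sqrt (hd i).le).symm
  have hgr : gvec W f α x = (Dmat W f α x - Bmat W) *ᵥ (x - xs) + r := by
    have h1 : Dmat W f α x - Bmat W = (1 - W) + diagonal (fun i => α * d2 f i (x i)) := by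
      ext i j
      by_cases h : i = j
      · subst h; simp [Dmat, dEntry, Bmat_apply]; ring
      · simp [Dmat, Bmat_apply, h]
    rw [h1, add_mulVec, mulVec_sub]
    funext i
    have h2 := congrFun hg i
    simp only [gvec, Pi.zero_apply] at h2
    simp only [gvec, Pi.add_apply, Pi.sub_apply, mulVec_diagonal, hr]
    linarith
  have hPg : Dinvhalf W f α x *ᵥ gvec W f α x = y - Emat W f α x *ᵥ y + q := by
    have h1 : Dinvhalf W f α x * (Dmat W f α x - Bmat W) =
        (1 - Emat W f α x) * Dhalf W f α x := by
      rw [Matrix.mul_sub, Matrix.sub_mul, hHH, ← Matrix.mul_assoc, hPH, Matrix.one_mul, Emat,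
        Matrix.mul_assoc _ _ (Dhalf W f α x), hPH, Matrix.mul_one]
    rw [hgr, mulVec_add, mulVec_mulVec, h1, ← mulVec_mulVec, ← hy, ← hq, sub_mulVec, one_mulVec]
  have : Dhalf W f α x * Hhatinv W f α x = (1 + Emat W f α x) * Dinvhalf W f α x := by
    rw [Hhatinv, ← Matrix.mul_assoc, ← Matrix.mul_assoc, hHP, Matrix.one_mul, Emat]
  rw [mulVec_mulVec, this, ← mulVec_mulVec, hPg, add_mulVec, one_mulVec, mulVec_add, mulVec_sub]
  abel

theorem upd_decomp {n : ℕ} (W : Matrix (Fin n) (Fin n) ℝ) (f : Fin n → ℝ → ℝ) (α : ℝ)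
    (p : Fin n → ℝ) (ε : ℝ) (x xs z w : Fin n → ℝ)
    (h : Dhalf W f α x *ᵥ (Hhatinv W f α x *ᵥ gvec W f α x) = z + w) (i : Fin n) :
    Dhalf W f α x *ᵥ (upd W f α p ε x i - xs) =
      (Dhalf W f α x *ᵥ (x - xs) - Pi.single i (ε / p i * z i)) - Pi.single i (ε / p i * w i) := by
  funext k
  have hk := congrFun h k
  simp only [Dhalf, mulVec_diagonal, Pi.add_apply] at hk
  simp only [Dhalf, mulVec_diagonal, Pi.sub_apply, upd]
  by_cases hki : k = i
  · subst hki
    simp only [Function.update_self, Pi.single_eq_same]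
    linear_combination (-(ε / p k)) * hk
  · simp [hki]

theorem Dinvhalf_bound {n : ℕ} (W : Matrix (Fin n) (Fin n) ℝ) (f : Fin n → ℝ → ℝ) (α : ℝ)
    (x : Fin n → ℝ) (d : ℝ) (hd0 : 0 < d) (hd : ∀ i, d ≤ dEntry W f α x i) (v : Fin n → ℝ) :
    euclNorm (Dinvhalf W f α x *ᵥ v) ≤ (Real.sqrt d)⁻¹ * euclNorm v := by
  refine en_mono _ _ _ (inv_nonneg.2 (Real.sqrt_nonneg _)) fun i => ?_
  simp only [Dinvhalf, mulVec_diagonal]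
  rw [abs_mul, abs_of_nonneg (inv_nonneg.2 (Real.sqrt_nonneg _))]
  refine mul_le_mul_of_nonneg_right ?_ (abs_nonneg _)
  exact inv_anti₀ (Real.sqrt_pos.2 hd0) (Real.sqrt_le_sqrt (hd i))

theorem Dhalf_lower {n : ℕ} (W : Matrix (Fin n) (Fin n) ℝ) (f : Fin n → ℝ → ℝ) (α : ℝ)
    (x : Fin n → ℝ) (d : ℝ) (hd0 : 0 < d) (hd : ∀ i, d ≤ dEntry W f α x i) (v : Fin n → ℝ) :
    d * euclNorm v ^ 2 ≤ euclNorm (Dhalf W f α x *ᵥ v) ^ 2 := by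
  rw [en_sq, en_sq, Finset.mul_sum]
  refine Finset.sum_le_sum fun i _ => ?_
  simp only [Dhalf, mulVec_diagonal]
  rw [mul_pow, Real.sq_sqrt (hd0.le.trans (hd i))]
  exact mul_le_mul_of_nonneg_right (hd i) (sq_nonneg _)

theorem Hhat_bound {n : ℕ} (W : Matrix (Fin n) (Fin n) ℝ) (f : Fin n → ℝ → ℝ) (α : ℝ)
    (x : Fin n → ℝ) (d : ℝ) (hd0 : 0 < d) (hd : ∀ i, d ≤ dEntry W f α x i) (ρ : ℝ) (hρ : 0 ≤ ρ)
    (hE : ∀ v, euclNorm (Emat W f α x *ᵥ v) ≤ ρ * euclNorm v) (v : Fin n → ℝ) :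
    euclNorm (Hhatinv W f α x *ᵥ v) ≤ (1 + ρ) / d * euclNorm v := by
  have h1 : Hhatinv W f α x *ᵥ v = Dinvhalf W f α x *ᵥ (Dinvhalf W f α x *ᵥ v
      + Emat W f α x *ᵥ (Dinvhalf W f α x *ᵥ v)) := by
    rw [Hhatinv, ← mulVec_mulVec, ← mulVec_mulVec, add_mulVec, one_mulVec, Emat]
  have hb := Dinvhalf_bound W f α x d hd0 hd
  have hs : 0 ≤ (Real.sqrt d)⁻¹ := inv_nonneg.2 (Real.sqrt_nonneg _)
  rw [h1]
  refine (hb _).trans ?_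
  have h2 := (en_add (Dinvhalf W f α x *ᵥ v) (Emat W f α x *ᵥ (Dinvhalf W f α x *ᵥ v))).trans
    (add_le_add le_rfl (hE _))
  have h3 := hb v
  have h4 : (Real.sqrt d)⁻¹ * (Real.sqrt d)⁻¹ = d⁻¹ := by
    rw [← mul_inv, Real.mul_self_sqrt hd0.le]
  calc _ ≤ (Real.sqrt d)⁻¹ * ((1 + ρ) * ((Real.sqrt d)⁻¹ * euclNorm v)) := by
        refine mul_le_mul_of_nonneg_left (h2.trans ?_) hs
        have := mul_le_mul_of_nonneg_left h3 (by linarith : 0 ≤ 1 + ρ)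
        linarith
    _ = ((Real.sqrt d)⁻¹ * (Real.sqrt d)⁻¹) * (1 + ρ) * euclNorm v := by ring
    _ = _ := by rw [h4]; ring

/-- Expected linear–quadratic recursion for the weighted error: with `x = x̄^(j)`,
`Σᵢ pᵢ‖D(x)^{1/2}(x^(i) − x*)‖ ≤ Γ₁‖D(x̄)^{1/2}(x − x*)‖² + C₁(1 + C₂‖g(x̄)‖^{1/2})‖D(x̄)^{1/2}(x − x*)‖`. -/
theorem stmt17 (n : ℕ) (hn : 1 ≤ n)
    (W : Matrix (Fin n) (Fin n) ℝ) (hWsymm : W.IsSymm)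
    (hWnonneg : ∀ i j, 0 ≤ W i j) (hWlt : ∀ i j, W i j < 1)
    (hWone : W.mulVec (fun _ => 1) = fun _ => 1)
    (hWnull : ∀ x : Fin n → ℝ, ((1 - W).mulVec x = 0 ↔ ∃ c : ℝ, x = fun _ => c))
    (δ Δ : ℝ) (hδ : 0 < δ) (hδΔ : δ ≤ Δ) (hΔ : Δ < 1)
    (hWdiag : ∀ i, δ ≤ W i i ∧ W i i ≤ Δ)
    (f : Fin n → ℝ → ℝ) (hf : ∀ i, ContDiff ℝ 2 (f i))
    (hconv : ∀ i, ConvexOn ℝ Set.univ (f i))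
    (m M : ℝ) (hm : 0 < m) (hmM : m ≤ M)
    (hd2 : ∀ i s, m ≤ d2 f i s ∧ d2 f i s ≤ M)
    (α : ℝ) (hα : 0 < α)
    (p : Fin n → ℝ) (pmin pmax : ℝ) (hpmin : 0 < pmin) (hpmax : pmax < 1)
    (hp : ∀ i, pmin ≤ p i ∧ p i ≤ pmax) (hpsum : ∑ i, p i = 1)
    (L : ℝ) (hLip : ∀ i s s', |d2 f i s - d2 f i s'| ≤ L * |s - s'|)
    (xstar : Fin n → ℝ) (hmin : ∀ y, Fobj W f α xstar ≤ Fobj W f α y)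
    (ρ lam Lam : ℝ) (hρ : ρ = 2 * (1 - δ) / (2 * (1 - δ) + α * m))
    (hlam : lam = 1 / (2 * (1 - δ) + α * M))
    (hLam : Lam = (1 + ρ) / (2 * (1 - Δ) + α * m))
    (ε : ℝ) (hε : 0 < ε) (hεlt : ε < min (1 / 2) (2 * pmin * (lam / Lam) ^ 2))
    (C1 : ℝ)
    (hC1 : C1 = Real.sqrt
      (1 + ε * max (ε / pmin - 2) (ε * (1 - ρ ^ 2) ^ 2 / pmin - 2 * (1 - ρ ^ 2))))
    (C2 : ℝ) (hC2 : C2 = Real.sqrt (ε * α * L * Lam / (pmin * (2 * (1 - Δ) + α * m)))) :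
    ∀ (xbar : Fin n → ℝ) (j : Fin n),
      ∑ i, p i *
          euclNorm ((Dhalf W f α (upd W f α p ε xbar j)).mulVec
            (upd W f α p ε (upd W f α p ε xbar j) i - xstar)) ≤
        (Real.sqrt (2 * (1 - δ) + α * M) * α * L * ε * Lam /
            (2 * pmin * (2 * (1 - Δ) + α * m))) *
          euclNorm ((Dhalf W f α xbar).mulVec (upd W f α p ε xbar j - xstar)) ^ 2 +
        C1 * (1 + C2 * Real.sqrt (euclNorm (gvec W f α xbar))) *
          euclNorm ((Dhalf W f α xbar).mulVec (upd W f α p ε xbar j - xstar)) := by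
  intro xbar j
  have hL : 0 ≤ L := by
    have := (abs_nonneg _).trans (hLip j 0 1)
    simpa using this
  set d := 2 * (1 - Δ) + α * m with hd
  set T := 2 * (1 - δ) + α * M with hT
  have hαm : 0 < α * m := mul_pos hα hm
  have hd0 : 0 < d := by rw [hd]; linarith
  have hdT : d ≤ T := by
    have := mul_le_mul_of_nonneg_left hmM hα.le
    rw [hd, hT]; linarith
  have hden : 0 < 2 * (1 - δ) + α * m := by linarith
  have hρ0 : 0 ≤ ρ := by rw [hρ]; exact div_nonneg (by linarith) hden.le
  have hLam0 : 0 ≤ Lam := by rw [hLam]; exact div_nonneg (by linarith) hd0.le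
  have hdE : ∀ x i, d ≤ dEntry W f α x i := by
    intro x i
    have := mul_le_mul_of_nonneg_left (hd2 i (x i)).1 hα.le
    have := (hWdiag i).2
    rw [hd, dEntry]; linarith
  have hdpos : ∀ x i, 0 < dEntry W f α x i := fun x i => hd0.trans_le (hdE x i)
  have hrow : ∀ x i, 2 * (1 - W i i) ≤ ρ * dEntry W f α x i := by
    intro x i
    have h1 := mul_le_mul_of_nonneg_left (hd2 i (x i)).1 hα.le
    have h2 := (hWdiag i).1
    have h3 := mul_le_mul_of_nonneg_left
      (add_le_add h1 (le_refl (2 * (1 - W i i)))) hρ0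
    refine le_trans ?_ h3
    rw [hρ, div_mul_eq_mul_div, le_div_iff₀ hden]
    nlinarith [mul_nonneg hαm.le (sub_nonneg.2 h2)]
  have hEb : ∀ x v, euclNorm (Emat W f α x *ᵥ v) ≤ ρ * euclNorm v := fun x v =>
    Emat_bound W hWsymm hWnonneg hWlt hWone f α x (hdpos x) ρ hρ0 (hrow x) v
  have hp0 : ∀ i, 0 < p i := fun i => hpmin.trans_le (hp i).1
  have hfd : ∀ i, Differentiable ℝ (f i) := fun i => (hf i).differentiable (by norm_num)
  have hfd' : ∀ i, Differentiable ℝ (deriv (f i)) := fun i => by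
    have := (contDiff_succ_iff_deriv (n := 1)).1 (hf i)
    exact this.2.2.differentiable (by norm_num)
  have hg := grad_zero W hWsymm f hfd α xstar hmin
  set x := upd W f α p ε xbar j with hx
  set y := Dhalf W f α x *ᵥ (x - xstar) with hy
  set N := euclNorm (Dhalf W f α xbar *ᵥ (x - xstar)) with hN
  set r : Fin n → ℝ := fun i => α * (deriv (f i) (x i) - deriv (f i) (xstar i)
      - d2 f i (x i) * (x i - xstar i)) with hr
  set q := Dinvhalf W f α x *ᵥ r with hq
  set E := Emat W f α x with hE
  have hdec := Hhat_decomp W f α x xstar (hdpos x) hg r (fun i => rfl) y q hy hq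
  have hupd := upd_decomp W f α p ε x xstar _ _ hdec
  have hN0 : 0 ≤ N := en_nonneg _
  -- remainder bound
  have hu : euclNorm (x - xstar) ^ 2 ≤ N ^ 2 / d := by
    rw [le_div_iff₀ hd0, mul_comm]
    exact Dhalf_lower W f α xbar d hd0 (hdE xbar) _
  have hrb : euclNorm r ≤ α * L / 2 * euclNorm (x - xstar) ^ 2 := by
    have h1 : euclNorm r ≤ α * L / 2 * euclNorm (x - xstar) * euclNorm (x - xstar) := by
      refine en_mono _ _ _ (mul_nonneg (by positivity) (en_nonneg _)) fun i => ?_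
      have ht := taylor_lip (deriv (f i)) (hfd' i) L (hLip i) (x i) (xstar i)
      have h2 : r i = -(α * (deriv (f i) (xstar i) - deriv (f i) (x i)
          - deriv (deriv (f i)) (x i) * (xstar i - x i))) := by
        simp only [hr, d2]; ring
      rw [h2, abs_neg, abs_mul, abs_of_pos hα]
      have h3 := abs_le_en (x - xstar) i
      have h4 : (xstar i - x i) ^ 2 = |(x - xstar) i| * |(x - xstar) i| := by
        rw [abs_mul_abs_self, Pi.sub_apply]; ring
      rw [h4] at ht
      have h5 := mul_le_mul_of_nonneg_right h3 (abs_nonneg ((x - xstar) i))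
      have h6 := mul_le_mul_of_nonneg_left ht hα.le
      have h7 := mul_le_mul_of_nonneg_left h5 (by positivity : 0 ≤ α * L / 2)
      linarith
    calc _ ≤ _ := h1
      _ = _ := by ring
  have hqb : euclNorm (q + E *ᵥ q) ≤ Real.sqrt T * α * L * Lam / (2 * d) * N ^ 2 := by
    have h1 := (en_add q (E *ᵥ q)).trans (add_le_add le_rfl (hEb x q))
    have h2 := Dinvhalf_bound W f α x d hd0 (hdE x) r
    rw [← hq] at h2
    have h3 : (Real.sqrt d)⁻¹ ≤ Real.sqrt T / d := by
      have hsd : 0 < Real.sqrt d := Real.sqrt_pos.2 hd0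
      rw [le_div_iff₀ hd0, inv_mul_le_iff₀ hsd]
      calc d = Real.sqrt d * Real.sqrt d := (Real.mul_self_sqrt hd0.le).symm
        _ ≤ _ := mul_le_mul_of_nonneg_left (Real.sqrt_le_sqrt hdT) hsd.le
    have hrb' : euclNorm r ≤ α * L / 2 * (N ^ 2 / d) :=
      hrb.trans (mul_le_mul_of_nonneg_left hu (by positivity))
    have h4 : euclNorm q ≤ Real.sqrt T / d * (α * L / 2 * (N ^ 2 / d)) :=
      h2.trans (mul_le_mul h3 hrb' (en_nonneg _) (div_nonneg (Real.sqrt_nonneg _) hd0.le))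
    have h5 := mul_le_mul_of_nonneg_left h4 (by linarith : 0 ≤ 1 + ρ)
    calc _ ≤ (1 + ρ) * euclNorm q := by linarith
      _ ≤ _ := h5
      _ = _ := by rw [hLam]; field_simp
  -- change of metric
  have hyN : euclNorm y ≤ (1 + C2 * Real.sqrt (euclNorm (gvec W f α xbar))) * N := by
    set gn := euclNorm (gvec W f α xbar) with hgn
    have hgn0 : 0 ≤ gn := en_nonneg _
    set a := ε * α * L * Lam / (pmin * d) * gn with ha
    have hc0 : 0 ≤ ε * α * L * Lam / (pmin * d) := by positivity
    have ha0 : 0 ≤ a := mul_nonneg hc0 hgn0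
    have hsa : C2 * Real.sqrt gn = Real.sqrt a := by
      rw [hC2, ha, Real.sqrt_mul hc0]
    rw [hsa]
    refine en_mono _ _ _ (by positivity) fun i => ?_
    simp only [hy, Dhalf, mulVec_diagonal]
    rw [abs_mul, abs_mul, ← mul_assoc]
    refine mul_le_mul_of_nonneg_right ?_ (abs_nonneg _)
    rw [abs_of_nonneg (Real.sqrt_nonneg _), abs_of_nonneg (Real.sqrt_nonneg _)]
    have hxi : |x i - xbar i| ≤ ε / pmin * (Lam * gn) := by
      have hb := Hhat_bound W f α xbar d hd0 (hdE xbar) ρ hρ0 (hEb xbar) (gvec W f α xbar)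
      rw [← hLam] at hb
      have hnn : 0 ≤ ε / pmin * (Lam * gn) := by positivity
      by_cases hij : i = j
      · subst hij
        have : x i - xbar i = -(ε / p i * (Hhatinv W f α xbar *ᵥ gvec W f α xbar) i) := by
          rw [hx, upd, Function.update_self]; ring
        rw [this, abs_neg, abs_mul, abs_of_pos (div_pos hε (hp0 i))]
        exact mul_le_mul (div_le_div_of_nonneg_left hε.le hpmin (hp i).1)
          ((abs_le_en _ i).trans hb) (abs_nonneg _) (by positivity)
      · have : x i - xbar i = 0 := by
          rw [hx, upd, Function.update_of_ne hij, sub_self]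
        rw [this, abs_zero]; exact hnn
    have hdd : dEntry W f α x i ≤ (1 + a) * dEntry W f α xbar i := by
      have h1 := (le_abs_self _).trans (hLip i (x i) (xbar i))
      have h2 := mul_le_mul_of_nonneg_left hxi hL
      have h3 := mul_le_mul_of_nonneg_left (h1.trans h2) hα.le
      have h4 := mul_le_mul_of_nonneg_left (hdE xbar i) ha0
      have h5 : a * d = α * (L * (ε / pmin * (Lam * gn))) := by
        rw [ha]; field_simp
      have h6 : dEntry W f α x i - dEntry W f α xbar i
          = α * (d2 f i (x i) - d2 f i (xbar i)) := by
        simp only [dEntry]; ring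
      linarith
    refine (Real.sqrt_le_sqrt hdd).trans ?_
    rw [Real.sqrt_mul (by linarith)]
    refine mul_le_mul_of_nonneg_right ?_ (Real.sqrt_nonneg _)
    refine Real.sqrt_le_iff.2 ⟨by positivity, ?_⟩
    have := Real.sq_sqrt ha0
    nlinarith [Real.sqrt_nonneg a]
  have hcon := contraction E (Emat_symm W hWsymm f α x) ρ hρ0 (hEb x) p pmin hpmin
    (fun i => (hp i).1) hpsum ε hε y
  rw [← hC1] at hcon
  have hC10 : 0 ≤ C1 := by rw [hC1]; exact Real.sqrt_nonneg _
  have hnoise : ∀ i, p i * euclNorm (Pi.single i (ε / p i * (q + E *ᵥ q) i)) ≤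
      p i * (ε / pmin * euclNorm (q + E *ᵥ q)) := by
    intro i
    rw [en_single, abs_mul, abs_of_pos (div_pos hε (hp0 i))]
    refine mul_le_mul_of_nonneg_left ?_ (hp0 i).le
    exact mul_le_mul (div_le_div_of_nonneg_left hε.le hpmin (hp i).1)
      (abs_le_en _ i) (abs_nonneg _) (by positivity)
  calc _ ≤ ∑ i, (p i * euclNorm (y - Pi.single i (ε / p i * (y - E *ᵥ (E *ᵥ y)) i))
        + p i * (ε / pmin * euclNorm (q + E *ᵥ q))) := by
        refine Finset.sum_le_sum fun i _ => ?_
        rw [hupd i]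
        refine (mul_le_mul_of_nonneg_left (en_sub _ _) (hp0 i).le).trans ?_
        rw [mul_add]
        exact add_le_add le_rfl (hnoise i)
    _ ≤ C1 * euclNorm y + ε / pmin * euclNorm (q + E *ᵥ q) := by
        rw [Finset.sum_add_distrib, ← Finset.sum_mul, hpsum, one_mul]
        exact add_le_add hcon le_rfl
    _ ≤ C1 * ((1 + C2 * Real.sqrt (euclNorm (gvec W f α xbar))) * N)
        + ε / pmin * (Real.sqrt T * α * L * Lam / (2 * d) * N ^ 2) :=
        add_le_add (mul_le_mul_of_nonneg_left hyN hC10)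
          (mul_le_mul_of_nonneg_left hqb (by positivity))
    _ = _ := by field_simp; ring
end
end

section
/- Let (a_r) be a sequence of nonnegative reals, Γ₁ > 0, θ > 0, Γ : ℕ → ℝ nonnegative, and T ≤ T + l natural numbers. Suppose that a_T < θ/(θΓ₁ + 1), and that for every r with T ≤ r < T + l one has a_{r+1} ≤ Γ₁ a_r² + Γ(r) a_r and θ Γ(r) ≤ a_r. Then for every r with T ≤ r ≤ T + l: a_r ≤ (θ/(θΓ₁ + 1)) · (((θΓ₁ + 1)/θ) · a_T)^{2^{r − T}}; in particular the sequence decreases at a quadratic rate on this interval. -/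
/-- Quadratic-rate recursion: if `a_T < θ/(θΓ₁+1)` and on `[T, T+l)` one has
`a_{r+1} ≤ Γ₁ a_r² + Γ(r) a_r` with `θΓ(r) ≤ a_r`, then for `T ≤ r ≤ T + l`,
`a_r ≤ (θ/(θΓ₁+1)) · (((θΓ₁+1)/θ) a_T)^{2^{r−T}}`. -/
theorem stmt19 (a : ℕ → ℝ) (ha : ∀ r, 0 ≤ a r)
    (Γ₁ θ : ℝ) (hΓ₁ : 0 < Γ₁) (hθ : 0 < θ)
    (Γ : ℕ → ℝ) (hΓ : ∀ r, 0 ≤ Γ r)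
    (T l : ℕ)
    (hstart : a T < θ / (θ * Γ₁ + 1))
    (hrec : ∀ r, T ≤ r → r < T + l → a (r + 1) ≤ Γ₁ * a r ^ 2 + Γ r * a r)
    (hlow : ∀ r, T ≤ r → r < T + l → θ * Γ r ≤ a r) :
    ∀ r, T ≤ r → r ≤ T + l →
      a r ≤ (θ / (θ * Γ₁ + 1)) * (((θ * Γ₁ + 1) / θ) * a T) ^ (2 ^ (r - T)) := by
  intro r hr
  have hc : 0 < θ * Γ₁ + 1 := by positivity
  induction r, hr using Nat.le_induction with
  | base =>
    intro _
    have : (θ / (θ * Γ₁ + 1)) * (((θ * Γ₁ + 1) / θ) * a T) = a T := by field_simp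
    simp only [Nat.sub_self, pow_zero, pow_one]
    exact this.ge
  | succ n hn ih =>
    intro hle
    have h1 := ih (by omega)
    have h2 := hrec n hn (by omega)
    have h3 := hlow n hn (by omega)
    have h4 : Γ n ≤ a n / θ := by
      rw [le_div_iff₀ hθ]; linarith
    have h5 : a (n + 1) ≤ ((θ * Γ₁ + 1) / θ) * a n ^ 2 := by
      have h6 := mul_le_mul_of_nonneg_right h4 (ha n)
      have h7 : ((θ * Γ₁ + 1) / θ) * a n ^ 2 = Γ₁ * a n ^ 2 + a n / θ * a n := by
        field_simp
      linarith
    have h8 := pow_le_pow_left₀ (ha n) h1 2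
    have h9 : 0 ≤ (θ * Γ₁ + 1) / θ := by positivity
    have h10 := mul_le_mul_of_nonneg_left h8 h9
    refine h5.trans (h10.trans (le_of_eq ?_))
    rw [Nat.succ_sub hn, Nat.succ_eq_add_one, pow_succ 2 (n - T), pow_mul]
    generalize (((θ * Γ₁ + 1) / θ) * a T) ^ (2 ^ (n - T)) = X
    field_simp
end
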